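/- For every t > 0 and every a > 0, the function u ↦ E[ (A_t − u)^+ ] is twice differentiable at a and its second derivative at a equals (2/a²)·e^{-2/a} · E[ exp( 2·exp(B_t − t/2) / (a + A_t) ) ] − (1/2)·e^{-2/a} · E[ M_t · (a/2 + A_t/2)^{-2} · exp( M_t / (a/2 + A_t/2) ) ]. -/

import Mathlib

open MeasureTheory ProbabilityTheory Real Set

noncomputable section

/-- A standard one-dimensional Brownian motion `B` (with `B 0 = 0`, continuous
paths, Gaussian increments and independent increments) on a probability space
with measure `P`. -/
structure IsBrownianMotion {Ω : Type*} [MeasurableSpace Ω]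
    (P : Measure Ω) (B : ℝ → Ω → ℝ) : Prop where
  isProbabilityMeasure : IsProbabilityMeasure P
  measurable : ∀ t : ℝ, Measurable (B t)
  start : ∀ ω, B 0 ω = 0
  continuous_paths : ∀ ω, Continuous fun t => B t ω
  gaussian_increments : ∀ s t : ℝ, 0 ≤ s → s ≤ t →
    P.map (fun ω => B t ω - B s ω) = gaussianReal 0 (Real.toNNReal (t - s))
  indep_increments : ∀ t : ℕ → ℝ, Monotone t → 0 ≤ t 0 →
    iIndepFun
      (fun (i : ℕ) (ω : Ω) => B (t (i + 1)) ω - B (t i) ω) P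

/-- The exponential martingale `M_t = exp (B_t - t/2)`. -/
def M {Ω : Type*} (B : ℝ → Ω → ℝ) (t : ℝ) (ω : Ω) : ℝ :=
  Real.exp (B t ω - t / 2)

/-- The time integral `A_t = ∫_0^t exp (B_s - s/2) ds`. -/
def A {Ω : Type*} (B : ℝ → Ω → ℝ) (t : ℝ) (ω : Ω) : ℝ :=
  ∫ s in (0 : ℝ)..t, Real.exp (B s ω - s / 2)

/-- The time integral with drift `ν`: `A_t^{(ν)} = ∫_0^t exp (B_s + (ν - 1/2) s) ds`. -/
def Adrift {Ω : Type*} (B : ℝ → Ω → ℝ) (ν t : ℝ) (ω : Ω) : ℝ :=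
  ∫ s in (0 : ℝ)..t, Real.exp (B s ω + (ν - 1 / 2) * s)


/-! ### Analytic part: the elementary function `k` and its logarithmic derivatives -/

def kw (c a y : ℝ) : ℝ := c * y / (1 + a * y)
def kr (a y : ℝ) : ℝ := 1 / (1 + a * y)
def kv0 (α c a y : ℝ) : ℝ := α * y + kw c a y
def kv1 (α c a y : ℝ) : ℝ := α * y + kw c a y * kr a y
def kv2 (α c a y : ℝ) : ℝ := α * y + kw c a y * (2 * kr a y ^ 2 - kr a y)
def kv3 (α c a y : ℝ) : ℝ := α * y + kw c a y * (6 * kr a y ^ 3 - 6 * kr a y ^ 2 + kr a y)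
def k0 (α c a y : ℝ) : ℝ := Real.exp (-kv0 α c a y)
def k1 (α c a y : ℝ) : ℝ := -kv1 α c a y * k0 α c a y
def k2 (α c a y : ℝ) : ℝ := (kv1 α c a y ^ 2 - kv2 α c a y) * k0 α c a y
def k3 (α c a y : ℝ) : ℝ :=
  (-kv1 α c a y ^ 3 + 3 * kv1 α c a y * kv2 α c a y - kv3 α c a y) * k0 α c a y

lemma kw_hasDerivAt {c a y : ℝ} (ha : 0 ≤ a) (hy : 0 < y) :
    HasDerivAt (kw c a) (kw c a y * kr a y / y) y := by
  have h1 : 0 < 1 + a * y := by positivity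
  have := ((hasDerivAt_id y).const_mul c).div
    (((hasDerivAt_id y).const_mul a).const_add 1) h1.ne'
  refine this.congr_deriv ?_
  simp only [kw, kr, id]
  field_simp
  ring

lemma kr_hasDerivAt {a y : ℝ} (ha : 0 ≤ a) (hy : 0 < y) :
    HasDerivAt (kr a) (-(kr a y * (1 - kr a y)) / y) y := by
  have h1 : 0 < 1 + a * y := by positivity
  have := (hasDerivAt_const y (1:ℝ)).div
    (((hasDerivAt_id y).const_mul a).const_add 1) h1.ne'
  refine this.congr_deriv ?_
  simp only [kr, id]
  field_simp
  ring

lemma kv0_hasDerivAt {α c a y : ℝ} (ha : 0 ≤ a) (hy : 0 < y) :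
    HasDerivAt (kv0 α c a) (kv1 α c a y / y) y := by
  refine (((hasDerivAt_id y).const_mul α).add (kw_hasDerivAt (c := c) ha hy)).congr_deriv ?_
  simp only [kv1]
  field_simp

lemma kv1_hasDerivAt {α c a y : ℝ} (ha : 0 ≤ a) (hy : 0 < y) :
    HasDerivAt (kv1 α c a) (kv2 α c a y / y) y := by
  refine (((hasDerivAt_id y).const_mul α).add
    ((kw_hasDerivAt (c := c) ha hy).mul (kr_hasDerivAt ha hy))).congr_deriv ?_
  simp only [kv2]
  field_simp
  ring

lemma kv2_hasDerivAt {α c a y : ℝ} (ha : 0 ≤ a) (hy : 0 < y) :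
    HasDerivAt (kv2 α c a) (kv3 α c a y / y) y := by
  have hr := kr_hasDerivAt ha hy
  refine (((hasDerivAt_id y).const_mul α).add
    ((kw_hasDerivAt (c := c) ha hy).mul (((hr.pow 2).const_mul 2).sub hr))).congr_deriv ?_
  simp only [kv3, Pi.pow_apply, Pi.sub_apply]
  field_simp
  ring

lemma k0_hasDerivAt {α c a y : ℝ} (ha : 0 ≤ a) (hy : 0 < y) :
    HasDerivAt (k0 α c a) (k1 α c a y / y) y := by
  refine ((kv0_hasDerivAt (α := α) (c := c) ha hy).neg.exp).congr_deriv ?_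
  simp only [k1, k0, Pi.neg_apply]
  field_simp

lemma k1_hasDerivAt {α c a y : ℝ} (ha : 0 ≤ a) (hy : 0 < y) :
    HasDerivAt (k1 α c a) (k2 α c a y / y) y := by
  refine ((kv1_hasDerivAt (α := α) (c := c) ha hy).neg.mul
    (k0_hasDerivAt (α := α) (c := c) ha hy)).congr_deriv ?_
  simp only [k1, k2, Pi.neg_apply]
  field_simp
  ring

lemma k2_hasDerivAt {α c a y : ℝ} (ha : 0 ≤ a) (hy : 0 < y) :
    HasDerivAt (k2 α c a) (k3 α c a y / y) y := by
  refine ((((kv1_hasDerivAt (α := α) (c := c) ha hy).pow 2).sub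
    (kv2_hasDerivAt (α := α) (c := c) ha hy)).mul
    (k0_hasDerivAt (α := α) (c := c) ha hy)).congr_deriv ?_
  simp only [k1, k3, Pi.pow_apply, Pi.sub_apply]
  field_simp
  ring

lemma kr_mem {a y : ℝ} (ha : 0 ≤ a) (hy : 0 < y) : 0 ≤ kr a y ∧ kr a y ≤ 1 := by
  have : 0 ≤ a * y := by positivity
  constructor
  · unfold kr; positivity
  · unfold kr; rw [div_le_one (by positivity)]; linarith

lemma kw_nonneg {c a y : ℝ} (hc : 0 ≤ c) (ha : 0 ≤ a) (hy : 0 < y) : 0 ≤ kw c a y := by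
  unfold kw; positivity

section bounds
variable {α c a y : ℝ}

lemma kv0_ge (hc : 0 ≤ c) (ha : 0 ≤ a) (hy : 0 < y) :
    α * y ≤ kv0 α c a y := by
  have := kw_nonneg hc ha hy
  unfold kv0; linarith

lemma kv0_nonneg (hα : 0 ≤ α) (hc : 0 ≤ c) (ha : 0 ≤ a) (hy : 0 < y) :
    0 ≤ kv0 α c a y := le_trans (by positivity) (kv0_ge hc ha hy)

lemma aux_abs {x w q : ℝ} (hx : 0 ≤ x) (hw : 0 ≤ w) (hq : |q| ≤ 1) : |x + w * q| ≤ x + w := by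
  rw [abs_le] at *
  constructor <;> nlinarith

lemma kv1_le (hα : 0 ≤ α) (hc : 0 ≤ c) (ha : 0 ≤ a) (hy : 0 < y) :
    |kv1 α c a y| ≤ kv0 α c a y := by
  obtain ⟨h1, h2⟩ := kr_mem ha hy
  exact aux_abs (by positivity) (kw_nonneg hc ha hy) (abs_le.2 ⟨by linarith, h2⟩)

lemma kv2_le (hα : 0 ≤ α) (hc : 0 ≤ c) (ha : 0 ≤ a) (hy : 0 < y) :
    |kv2 α c a y| ≤ kv0 α c a y := by
  obtain ⟨h1, h2⟩ := kr_mem ha hy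
  exact aux_abs (by positivity) (kw_nonneg hc ha hy) (abs_le.2 ⟨by nlinarith, by nlinarith⟩)

lemma kv3_le (hα : 0 ≤ α) (hc : 0 ≤ c) (ha : 0 ≤ a) (hy : 0 < y) :
    |kv3 α c a y| ≤ kv0 α c a y := by
  obtain ⟨h1, h2⟩ := kr_mem ha hy
  refine aux_abs (by positivity) (kw_nonneg hc ha hy) (abs_le.2 ⟨?_, ?_⟩)
  · set x := kr a y
    nlinarith [mul_nonneg h1 (sq_nonneg (x - 2/3)), sq_nonneg (x-1)]
  · set x := kr a y
    nlinarith [mul_nonneg h1 (sub_nonneg.2 h2), mul_nonneg (mul_nonneg h1 h1) (sub_nonneg.2 h2)]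

lemma k0_pos : 0 < k0 α c a y := Real.exp_pos _

lemma k1_le (hα : 0 ≤ α) (hc : 0 ≤ c) (ha : 0 ≤ a) (hy : 0 < y) :
    |k1 α c a y| ≤ kv0 α c a y * k0 α c a y := by
  unfold k1
  rw [abs_mul, abs_neg, abs_of_pos k0_pos]
  exact mul_le_mul_of_nonneg_right (kv1_le hα hc ha hy) k0_pos.le

lemma k2_le (hα : 0 ≤ α) (hc : 0 ≤ c) (ha : 0 ≤ a) (hy : 0 < y) :
    |k2 α c a y| ≤ (kv0 α c a y ^ 2 + kv0 α c a y) * k0 α c a y := by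
  unfold k2
  rw [abs_mul, abs_of_pos k0_pos]
  refine mul_le_mul_of_nonneg_right ?_ k0_pos.le
  refine (abs_sub _ _).trans ?_
  rw [abs_pow]
  gcongr
  · exact kv1_le hα hc ha hy
  · exact kv2_le hα hc ha hy

lemma k3_le (hα : 0 ≤ α) (hc : 0 ≤ c) (ha : 0 ≤ a) (hy : 0 < y) :
    |k3 α c a y| ≤
      (kv0 α c a y ^ 3 + 3 * kv0 α c a y ^ 2 + kv0 α c a y) * k0 α c a y := by
  unfold k3
  rw [abs_mul, abs_of_pos k0_pos]
  refine mul_le_mul_of_nonneg_right ?_ k0_pos.le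
  have h1 := kv1_le hα hc ha hy
  have h2 := kv2_le hα hc ha hy
  have h3 := kv3_le hα hc ha hy
  refine (abs_sub _ _).trans ?_
  refine add_le_add ((abs_add_le _ _).trans (add_le_add ?_ ?_)) h3
  · rw [neg_eq_neg_one_mul, abs_mul, abs_pow]; simp; gcongr
  · rw [abs_mul, abs_mul, abs_of_pos (by norm_num : (0:ℝ) < 3), pow_two, mul_assoc]
    gcongr
    exact (abs_nonneg _).trans h2

end bounds

lemma pow_mul_exp_neg_le {v : ℝ} (hv : 0 ≤ v) (n : ℕ) :
    v ^ n * Real.exp (-v) ≤ (n.factorial : ℝ) := by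
  have := Real.pow_div_factorial_le_exp v hv n
  rw [div_le_iff₀ (by positivity)] at this
  rw [Real.exp_neg]
  rw [← div_eq_mul_inv, div_le_iff₀ (Real.exp_pos _)]
  linarith

lemma exp_bounds {v : ℝ} (hv : 0 ≤ v) : Real.exp (-v) ≤ 1 ∧ v * Real.exp (-v) ≤ 1 ∧
    v ^ 2 * Real.exp (-v) ≤ 2 ∧ v ^ 3 * Real.exp (-v) ≤ 6 ∧ v ^ 4 * Real.exp (-v) ≤ 24 := by
  have h0 := pow_mul_exp_neg_le hv 0
  have h1 := pow_mul_exp_neg_le hv 1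
  have h2 := pow_mul_exp_neg_le hv 2
  have h3 := pow_mul_exp_neg_le hv 3
  have h4 := pow_mul_exp_neg_le hv 4
  simp [Nat.factorial] at *
  exact ⟨h0, h1, h2, h3, h4⟩

/-- iterated mean value step -/
lemma mvt_pow {f f' : ℝ → ℝ} {C : ℝ} {k : ℕ} {z : ℝ} (h0 : f 0 = 0)
    (hf : ∀ x, HasDerivAt f (f' x) x) (hC : 0 ≤ C) (hb : ∀ x, |f' x| ≤ C * |x| ^ k) :
    |f z| ≤ C * |z| ^ (k + 1) := by
  have := Convex.norm_image_sub_le_of_norm_hasDerivWithin_le (f := f) (f' := f')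
    (s := Metric.closedBall 0 |z|) (C := C * |z| ^ k) (x := 0) (y := z)
    (fun x _ => (hf x).hasDerivWithinAt)
    (fun x hx => by
      have : |x| ≤ |z| := by simpa using hx
      refine (hb x).trans ?_
      gcongr) (convex_closedBall _ _) (by simp) (by simp)
  simpa [h0, pow_succ, mul_assoc] using this

lemma taylor3 {K K1 K2 K3 : ℝ → ℝ} {C : ℝ} (hC : 0 ≤ C)
    (h0 : ∀ x, HasDerivAt K (K1 x) x) (h1 : ∀ x, HasDerivAt K1 (K2 x) x)
    (h2 : ∀ x, HasDerivAt K2 (K3 x) x) (hb : ∀ x, |K3 x| ≤ C) (z : ℝ) :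
    |K z - K 0 - K1 0 * z - K2 0 * z ^ 2 / 2| ≤ C * |z| ^ 3 := by
  have a2 : ∀ z, |K2 z - K2 0| ≤ C * |z| ^ 1 := fun z =>
    mvt_pow (f := fun z => K2 z - K2 0) (f' := K3) (k := 0) (by simp)
      (fun x => (h2 x).sub_const _) hC (by simpa using hb)
  have a1 : ∀ z, |K1 z - K1 0 - K2 0 * z| ≤ C * |z| ^ 2 := fun z =>
    mvt_pow (f := fun z => K1 z - K1 0 - K2 0 * z) (f' := fun z => K2 z - K2 0) (k := 1) (by simp)
      (fun x => (((h1 x).sub_const _).sub ((hasDerivAt_id x).const_mul (K2 0))).congr_deriv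
        (by simp)) hC a2
  exact mvt_pow (f := fun z => K z - K 0 - K1 0 * z - K2 0 * z ^ 2 / 2)
    (f' := fun z => K1 z - K1 0 - K2 0 * z) (k := 2) (by simp)
      (fun x => ((((h0 x).sub_const _).sub ((hasDerivAt_id x).const_mul (K1 0))).sub
        (((hasDerivAt_pow 2 x).const_mul (K2 0)).div_const 2)).congr_deriv
        (by simp; ring)) hC a1

/-- the standard Gaussian -/
abbrev gam : Measure ℝ := gaussianReal 0 1

lemma gam_int_pow (n : ℕ) : Integrable (fun x : ℝ => x ^ n) gam := by
  have h := (memLp_id_gaussianReal (μ := 0) (v := 1) n).integrable_norm_pow'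
  refine h.mono' (by fun_prop) (Filter.Eventually.of_forall fun x => ?_)
  simp

lemma gam_int_abs3 : Integrable (fun x : ℝ => (|x| + 1) ^ 3) gam := by
  have h : ∀ n : ℕ, Integrable (fun x : ℝ => |x| ^ n) gam := fun n => by
    refine (gam_int_pow n).norm.congr (Filter.Eventually.of_forall fun x => ?_)
    simp
  have := (((h 3).add ((h 2).const_mul 3)).add ((h 1).const_mul 3)).add (h 0)
  refine this.congr (Filter.Eventually.of_forall fun x => ?_)
  simp only [Pi.add_apply]
  ring

lemma gam_mean : ∫ x, x ∂gam = 0 := integral_id_gaussianReal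

lemma gam_sq : ∫ x, x ^ 2 ∂gam = 1 := by
  have h := variance_fun_id_gaussianReal (μ := 0) (v := 1)
  rw [variance_eq_integral (by fun_prop)] at h
  simpa [gam_mean] using h

def C0 : ℝ := 13 * (∫ x, (|x| + 1) ^ 3 ∂gam) + 1

lemma C0_pos : 0 < C0 := by
  have : 0 ≤ ∫ x, (|x| + 1) ^ 3 ∂gam := integral_nonneg fun x => by positivity
  unfold C0; linarith

lemma gauss_step {K K1 K2 K3 : ℝ → ℝ}
    (h0 : ∀ x, HasDerivAt K (K1 x) x) (h1 : ∀ x, HasDerivAt K1 (K2 x) x)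
    (h2 : ∀ x, HasDerivAt K2 (K3 x) x) (hb : ∀ x, |K3 x| ≤ 13) (hb2 : |K2 0| ≤ 3)
    (hb0 : ∀ x, |K x| ≤ 1)
    {s : ℝ} (hs : 0 < s) (hs1 : s ≤ 1) :
    |∫ x, K (s * x - s ^ 2 / 2) ∂gam - (K 0 + s ^ 2 / 2 * (K2 0 - K1 0))| ≤ C0 * s ^ 3 := by
  have hKc : Continuous K := continuous_iff_continuousAt.2 fun x => (h0 x).continuousAt
  have hfint : Integrable (fun x => K (s * x - s ^ 2 / 2)) gam := by
    refine Integrable.of_bound (by fun_prop) 1 (Filter.Eventually.of_forall fun x => hb0 _)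
  have i1 : Integrable (fun x : ℝ => x) gam := by simpa using gam_int_pow 1
  have i2 := gam_int_pow 2
  have hpoly : Integrable (fun x : ℝ => K 0 + K1 0 * (s * x - s ^ 2 / 2)
      + K2 0 * (s * x - s ^ 2 / 2) ^ 2 / 2) gam := by
    have : (fun x : ℝ => K 0 + K1 0 * (s * x - s ^ 2 / 2)
      + K2 0 * (s * x - s ^ 2 / 2) ^ 2 / 2) = fun x =>
      (K 0 - K1 0 * s ^ 2 / 2 + K2 0 * s ^ 4 / 8) + (K1 0 * s - K2 0 * s ^ 3 / 2) * x
        + (K2 0 * s ^ 2 / 2) * x ^ 2 := by ext x; ring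
    rw [this]
    exact ((integrable_const _).add (i1.const_mul _)).add (i2.const_mul _)
  have hpi : ∫ x, (K 0 + K1 0 * (s * x - s ^ 2 / 2)
      + K2 0 * (s * x - s ^ 2 / 2) ^ 2 / 2) ∂gam
      = K 0 + s ^ 2 / 2 * (K2 0 - K1 0) + K2 0 * s ^ 4 / 8 := by
    have : (fun x : ℝ => K 0 + K1 0 * (s * x - s ^ 2 / 2)
      + K2 0 * (s * x - s ^ 2 / 2) ^ 2 / 2) = fun x =>
      ((K 0 - K1 0 * s ^ 2 / 2 + K2 0 * s ^ 4 / 8) + (K1 0 * s - K2 0 * s ^ 3 / 2) * x)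
        + (K2 0 * s ^ 2 / 2) * x ^ 2 := by ext x; ring
    have hi : Integrable (fun x : ℝ => (K 0 - K1 0 * s ^ 2 / 2 + K2 0 * s ^ 4 / 8) +
        (K1 0 * s - K2 0 * s ^ 3 / 2) * x) gam := (integrable_const _).add (i1.const_mul _)
    rw [this, integral_add hi (i2.const_mul _),
      integral_add (integrable_const _) (i1.const_mul _), integral_const_mul, integral_const_mul,
      gam_mean, gam_sq]
    simp
    ring
  have hd : |∫ x, (K (s * x - s ^ 2 / 2) - (K 0 + K1 0 * (s * x - s ^ 2 / 2)
      + K2 0 * (s * x - s ^ 2 / 2) ^ 2 / 2)) ∂gam| ≤ ∫ x, 13 * s ^ 3 * (|x| + 1) ^ 3 ∂gam := by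
    rw [← Real.norm_eq_abs]
    refine norm_integral_le_of_norm_le (gam_int_abs3.const_mul _)
      (Filter.Eventually.of_forall fun x => ?_)
    have := taylor3 (by norm_num) h0 h1 h2 hb (s * x - s ^ 2 / 2)
    rw [Real.norm_eq_abs]
    have hz : |s * x - s ^ 2 / 2| ≤ s * (|x| + 1) := by
      refine (abs_sub _ _).trans ?_
      rw [abs_mul, abs_of_pos hs, abs_of_pos (by positivity : 0 < s ^ 2 / 2)]
      nlinarith
    calc _ = |K (s * x - s ^ 2 / 2) - K 0 - K1 0 * (s * x - s ^ 2 / 2)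
          - K2 0 * (s * x - s ^ 2 / 2) ^ 2 / 2| := by congr 1; ring
      _ ≤ _ := this
      _ ≤ 13 * (s * (|x| + 1)) ^ 3 := by gcongr
      _ = _ := by ring
  rw [integral_sub hfint hpoly, hpi, integral_const_mul] at hd
  have h4 : |K2 0 * s ^ 4 / 8| ≤ s ^ 3 := by
    rw [abs_div, abs_mul, abs_of_pos (by positivity : 0 < s ^ 4), abs_of_pos (by norm_num : (0:ℝ) < 8)]
    have : s ^ 4 ≤ s ^ 3 := pow_le_pow_of_le_one hs.le hs1 (by norm_num)
    have h3 : 0 < s ^ 4 := by positivity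
    nlinarith
  unfold C0
  rw [abs_le] at *
  constructor <;> nlinarith

section onestep
variable {α c a : ℝ}

lemma k3_bound (hα : 0 ≤ α) (hc : 0 ≤ c) (ha : 0 ≤ a) {y : ℝ} (hy : 0 < y) :
    |k3 α c a y| ≤ 13 := by
  have hv := kv0_nonneg hα hc ha hy
  obtain ⟨-, e1, e2, e3, -⟩ := exp_bounds hv
  refine (k3_le hα hc ha hy).trans ?_
  unfold k0
  linarith

lemma k2_bound (hα : 0 ≤ α) (hc : 0 ≤ c) (ha : 0 ≤ a) {y : ℝ} (hy : 0 < y) :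
    |k2 α c a y| ≤ 3 := by
  have hv := kv0_nonneg hα hc ha hy
  obtain ⟨-, e1, e2, e3, -⟩ := exp_bounds hv
  refine (k2_le hα hc ha hy).trans ?_
  unfold k0
  linarith

lemma k1_bound (hα : 0 ≤ α) (hc : 0 ≤ c) (ha : 0 ≤ a) {y : ℝ} (hy : 0 < y) :
    |k1 α c a y| ≤ 1 := by
  have hv := kv0_nonneg hα hc ha hy
  obtain ⟨-, e1, e2, e3, -⟩ := exp_bounds hv
  refine (k1_le hα hc ha hy).trans ?_
  unfold k0
  linarith

lemma k0_bound (hα : 0 ≤ α) (hc : 0 ≤ c) (ha : 0 ≤ a) {y : ℝ} (hy : 0 < y) :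
    |k0 α c a y| ≤ 1 := by
  have hv := kv0_nonneg hα hc ha hy
  rw [abs_of_pos k0_pos]
  exact (exp_bounds hv).1

lemma log_chain {f f' : ℝ → ℝ} (hf : ∀ y, 0 < y → HasDerivAt f (f' y / y) y) {θ : ℝ}
    (hθ : 0 < θ) (z : ℝ) :
    HasDerivAt (fun z => f (Real.exp z / θ)) (f' (Real.exp z / θ)) z := by
  have hp : 0 < Real.exp z / θ := by positivity
  refine ((hf _ hp).comp z ((Real.hasDerivAt_exp z).div_const θ)).congr_deriv ?_
  field_simp

lemma inv_chain {f f' : ℝ → ℝ} (hf : ∀ y, 0 < y → HasDerivAt f (f' y / y) y) {θ : ℝ}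
    (hθ : 0 < θ) :
    HasDerivAt (fun θ => f (1 / θ)) (-f' (1 / θ) / θ) θ := by
  have hp : 0 < 1 / θ := by positivity
  have h2 : HasDerivAt (fun θ : ℝ => 1 / θ) (-1 / θ ^ 2) θ := by
    simpa [neg_div] using hasDerivAt_inv hθ.ne'
  refine ((hf _ hp).comp θ h2).congr_deriv ?_
  field_simp

lemma k_step (hα : 0 ≤ α) (hc : 0 ≤ c) (ha : 0 ≤ a) {θ s : ℝ} (hθ : 0 < θ)
    (hs : 0 < s) (hs1 : s ≤ 1) :
    |∫ x, k0 α c a (Real.exp (s * x - s ^ 2 / 2) / θ) ∂gam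
      - (k0 α c a (1 / θ) + s ^ 2 / 2 * (k2 α c a (1 / θ) - k1 α c a (1 / θ)))|
      ≤ C0 * s ^ 3 := by
  have hp : ∀ z, 0 < Real.exp z / θ := fun z => by positivity
  have := gauss_step (K := fun z => k0 α c a (Real.exp z / θ))
    (log_chain (fun y hy => k0_hasDerivAt ha hy) hθ)
    (log_chain (fun y hy => k1_hasDerivAt ha hy) hθ)
    (log_chain (fun y hy => k2_hasDerivAt ha hy) hθ)
    (fun z => k3_bound hα hc ha (hp z)) (k2_bound hα hc ha (hp 0))
    (fun z => k0_bound hα hc ha (hp z)) hs hs1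
  simpa only [Real.exp_zero] using this

lemma taylor2_seg {f f' f'' : ℝ → ℝ} {C r δ : ℝ} (hC : 0 ≤ C)
    (h0 : ∀ x ∈ uIcc r (r + δ), HasDerivAt f (f' x) x)
    (h1 : ∀ x ∈ uIcc r (r + δ), HasDerivAt f' (f'' x) x)
    (hb : ∀ x ∈ uIcc r (r + δ), |f'' x| ≤ C) :
    |f (r + δ) - f r - δ * f' r| ≤ C * δ ^ 2 := by
  have b1 : ∀ x ∈ uIcc r (r + δ), |f' x - f' r| ≤ C * |δ| := fun x hx => by
    have := Convex.norm_image_sub_le_of_norm_hasDerivWithin_le (f := f') (f' := f'')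
      (s := uIcc r (r + δ)) (C := C) (x := r) (y := x)
      (fun x hx => (h1 x hx).hasDerivWithinAt) hb (convex_uIcc _ _) left_mem_uIcc hx
    refine this.trans ?_
    gcongr
    rw [Real.norm_eq_abs]
    simpa using abs_sub_left_of_mem_uIcc hx
  have := Convex.norm_image_sub_le_of_norm_hasDerivWithin_le (f := fun x => f x - f' r * x)
      (f' := fun x => f' x - f' r)
      (s := uIcc r (r + δ)) (C := C * |δ|) (x := r) (y := r + δ)
      (fun x hx => (((h0 x hx).sub ((hasDerivAt_id x).const_mul (f' r))).congr_deriv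
        (by simp)).hasDerivWithinAt) b1 (convex_uIcc _ _) left_mem_uIcc right_mem_uIcc
  rw [Real.norm_eq_abs, Real.norm_eq_abs] at this
  have e : C * |δ| * |r + δ - r| = C * δ ^ 2 := by
    rw [add_sub_cancel_left, mul_assoc, abs_mul_abs_self]; ring
  rw [e] at this
  calc _ = _ := by congr 1; ring
    _ ≤ _ := this

lemma taylor1_seg {f f' : ℝ → ℝ} {C r δ : ℝ}
    (h0 : ∀ x ∈ uIcc r (r + δ), HasDerivAt f (f' x) x)
    (hb : ∀ x ∈ uIcc r (r + δ), |f' x| ≤ C) :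
    |f (r + δ) - f r| ≤ C * |δ| := by
  have := Convex.norm_image_sub_le_of_norm_hasDerivWithin_le (f := f)
      (f' := f')
      (s := uIcc r (r + δ)) (C := C) (x := r) (y := r + δ)
      (fun x hx => (h0 x hx).hasDerivWithinAt) hb (convex_uIcc _ _) left_mem_uIcc right_mem_uIcc
  simpa using this

lemma k_taylor2 (ha : 0 ≤ a) {C r δ : ℝ} (hC : 0 ≤ C)
    (hpos : ∀ x ∈ uIcc r (r + δ), 0 < x)
    (hb : ∀ x ∈ uIcc r (r + δ), |(k2 α c a (1 / x) + k1 α c a (1 / x)) / x ^ 2| ≤ C) :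
    |k0 α c a (1 / (r + δ)) - k0 α c a (1 / r) - δ * (-k1 α c a (1 / r) / r)| ≤ C * δ ^ 2 := by
  refine taylor2_seg (f := fun θ => k0 α c a (1 / θ)) (f' := fun θ => -k1 α c a (1 / θ) / θ)
    (f'' := fun x => (k2 α c a (1 / x) + k1 α c a (1 / x)) / x ^ 2) hC ?_ ?_ hb
  · intro x hx
    exact inv_chain (fun y hy => k0_hasDerivAt ha hy) (hpos x hx)
  · intro x hx
    have hx0 := hpos x hx
    refine ((inv_chain (fun y hy => k1_hasDerivAt (α := α) (c := c) ha hy) hx0).neg.div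
      (hasDerivAt_id x) hx0.ne').congr_deriv ?_
    simp only [id, Pi.neg_apply]
    field_simp
    ring

lemma k_taylor1 (ha : 0 ≤ a) {C r δ : ℝ}
    (hpos : ∀ x ∈ uIcc r (r + δ), 0 < x)
    (hb : ∀ x ∈ uIcc r (r + δ), |(k2 α c a (1 / x) - k3 α c a (1 / x)) / x| ≤ C) :
    |(k2 α c a (1 / (r + δ)) - k1 α c a (1 / (r + δ))) -
      (k2 α c a (1 / r) - k1 α c a (1 / r))| ≤ C * |δ| := by
  refine taylor1_seg (f := fun θ => k2 α c a (1 / θ) - k1 α c a (1 / θ))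
    (f' := fun x => (k2 α c a (1 / x) - k3 α c a (1 / x)) / x) ?_ hb
  intro x hx
  have hx0 := hpos x hx
  refine ((inv_chain (fun y hy => k2_hasDerivAt (α := α) (c := c) ha hy) hx0).sub
    (inv_chain (fun y hy => k1_hasDerivAt (α := α) (c := c) ha hy) hx0)).congr_deriv ?_
  ring

lemma k_id (c a y : ℝ) (h : ℝ) :
    k0 2 c a y + h * (k1 2 c a y * y) + h / 2 * (k2 2 c a y - k1 2 c a y)
    = Real.exp (-(2 * y)) * (k0 0 c a y - h * (k1 0 c a y * y)
      + h / 2 * (k2 0 c a y - k1 0 c a y)) := by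
  have e : k0 2 c a y = Real.exp (-(2 * y)) * k0 0 c a y := by
    unfold k0 kv0; rw [← Real.exp_add]; congr 1; ring
  simp only [k1, k2, e]
  simp only [kv1, kv2]
  ring

lemma minus_est (hc : 0 ≤ c) (ha : 0 ≤ a) {r s : ℝ} (hs : 0 < s) (hs1 : s ≤ 1)
    (hr : s ^ 2 < r) :
    |∫ x, k0 2 c a (Real.exp (s * x - s ^ 2 / 2) / (r - s ^ 2)) ∂gam
      - (k0 2 c a (1 / r) + s ^ 2 * (k1 2 c a (1 / r) * (1 / r))
        + s ^ 2 / 2 * (k2 2 c a (1 / r) - k1 2 c a (1 / r)))| ≤ (C0 + 22) * s ^ 3 := by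
  have hθ : 0 < r - s ^ 2 := by linarith
  have h1 := k_step (α := 2) (by norm_num) hc ha hθ hs hs1
  have hpos : ∀ x ∈ uIcc r (r + -s ^ 2), 0 < x := by
    intro x hx
    have := hx.1
    rw [inf_eq_right.2 (by nlinarith)] at this
    linarith
  have hv : ∀ x, 0 < x → 0 ≤ kv0 2 c a (1 / x) ∧ 1 / x ≤ kv0 2 c a (1 / x) / 2 := by
    intro x hx
    have hy : 0 < 1 / x := by positivity
    have := kv0_ge (α := 2) hc ha hy
    constructor <;> linarith
  have h2 := k_taylor2 (α := 2) (c := c) (C := 9) ha (by norm_num) hpos (by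
    intro x hx
    have hx0 := hpos x hx
    have hy : 0 < 1 / x := by positivity
    obtain ⟨v0, v1⟩ := hv x hx0
    obtain ⟨-, e1, e2, e3, e4⟩ := exp_bounds v0
    have b1 := k1_le (α := 2) (by norm_num) hc ha hy
    have b2 := k2_le (α := 2) (by norm_num) hc ha hy
    rw [div_eq_mul_one_div, abs_mul, ← one_div_pow, abs_of_pos (a := (1 / x) ^ 2) (by positivity)]
    have hk : 0 < k0 2 c a (1 / x) := k0_pos
    calc _ ≤ ((kv0 2 c a (1 / x) ^ 2 + kv0 2 c a (1 / x)) * k0 2 c a (1 / x)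
          + kv0 2 c a (1 / x) * k0 2 c a (1 / x)) * (kv0 2 c a (1 / x) / 2) ^ 2 := by
          gcongr
          exact (abs_add_le _ _).trans (add_le_add b2 b1)
      _ = (kv0 2 c a (1 / x) ^ 4 * k0 2 c a (1 / x)
          + 2 * (kv0 2 c a (1 / x) ^ 3 * k0 2 c a (1 / x))) / 4 := by ring
      _ ≤ 9 := by unfold k0; linarith)
  have h3 := k_taylor1 (α := 2) (c := c) (C := 26) ha hpos (by
    intro x hx
    have hx0 := hpos x hx
    have hy : 0 < 1 / x := by positivity
    obtain ⟨v0, v1⟩ := hv x hx0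
    obtain ⟨-, e1, e2, e3, e4⟩ := exp_bounds v0
    have b1 := k3_le (α := 2) (by norm_num) hc ha hy
    have b2 := k2_le (α := 2) (by norm_num) hc ha hy
    rw [div_eq_mul_one_div, abs_mul, abs_of_pos hy]
    have hk : 0 < k0 2 c a (1 / x) := k0_pos
    calc _ ≤ ((kv0 2 c a (1 / x) ^ 2 + kv0 2 c a (1 / x)) * k0 2 c a (1 / x)
          + (kv0 2 c a (1 / x) ^ 3 + 3 * kv0 2 c a (1 / x) ^ 2 + kv0 2 c a (1 / x))
            * k0 2 c a (1 / x)) * (kv0 2 c a (1 / x) / 2) := by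
          gcongr
          exact (abs_sub _ _).trans (add_le_add b2 b1)
      _ = (kv0 2 c a (1 / x) ^ 4 * k0 2 c a (1 / x)
          + 4 * (kv0 2 c a (1 / x) ^ 3 * k0 2 c a (1 / x))
          + 2 * (kv0 2 c a (1 / x) ^ 2 * k0 2 c a (1 / x))) / 2 := by ring
      _ ≤ 26 := by unfold k0; linarith)
  rw [abs_neg, abs_of_pos (by positivity : 0 < s ^ 2)] at h3
  simp only [← sub_eq_add_neg] at h2 h3
  have hs4 : s ^ 4 ≤ s ^ 3 := pow_le_pow_of_le_one hs.le hs1 (by norm_num)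
  have h3' : |s ^ 2 / 2 * ((k2 2 c a (1 / (r - s ^ 2)) - k1 2 c a (1 / (r - s ^ 2))) -
      (k2 2 c a (1 / r) - k1 2 c a (1 / r)))| ≤ 13 * s ^ 4 := by
    rw [abs_mul, abs_of_pos (by positivity : 0 < s ^ 2 / 2)]
    calc _ ≤ s ^ 2 / 2 * (26 * s ^ 2) := by gcongr
      _ = _ := by ring
  have e : -s ^ 2 * (-k1 2 c a (1 / r) / r) = s ^ 2 * (k1 2 c a (1 / r) * (1 / r)) := by ring
  rw [e] at h2
  rw [abs_le] at *
  constructor <;> nlinarith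

lemma plus_est (hc : 0 ≤ c) (ha : 0 ≤ a) {r s : ℝ} (hs : 0 < s) (hs1 : s ≤ 1)
    (hr : 0 < r) :
    Real.exp (-(2 * (1 / r))) * |∫ x, k0 0 c a (Real.exp (s * x - s ^ 2 / 2) / (r + s ^ 2)) ∂gam
      - (k0 0 c a (1 / r) - s ^ 2 * (k1 0 c a (1 / r) * (1 / r))
        + s ^ 2 / 2 * (k2 0 c a (1 / r) - k1 0 c a (1 / r)))| ≤ (C0 + 6) * s ^ 3 := by
  have hθ : 0 < r + s ^ 2 := by positivity
  have h1 := k_step (α := 0) le_rfl hc ha hθ hs hs1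
  have hge : ∀ x ∈ uIcc r (r + s ^ 2), r ≤ x := by
    intro x hx
    have := hx.1
    rwa [inf_eq_left.2 (by nlinarith)] at this
  have hpos : ∀ x ∈ uIcc r (r + s ^ 2), 0 < x := fun x hx => hr.trans_le (hge x hx)
  have h2 := k_taylor2 (α := 0) (c := c) (C := 4 * (1 / r) ^ 2) ha (by positivity) hpos (by
    intro x hx
    have hx0 := hpos x hx
    have hy : 0 < 1 / x := by positivity
    have b1 := k1_bound (α := 0) le_rfl hc ha hy
    have b2 := k2_bound (α := 0) le_rfl hc ha hy
    rw [div_eq_mul_one_div, abs_mul, ← one_div_pow, abs_of_pos (a := (1 / x) ^ 2) (by positivity)]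
    gcongr
    · exact (abs_add_le _ _).trans (by linarith)
    · exact hge x hx)
  have h3 := k_taylor1 (α := 0) (c := c) (C := 16 * (1 / r)) ha hpos (by
    intro x hx
    have hx0 := hpos x hx
    have hy : 0 < 1 / x := by positivity
    have b1 := k3_bound (α := 0) le_rfl hc ha hy
    have b2 := k2_bound (α := 0) le_rfl hc ha hy
    rw [div_eq_mul_one_div, abs_mul, abs_of_pos hy]
    gcongr
    · exact (abs_sub _ _).trans (by linarith)
    · exact hge x hx)
  rw [abs_of_pos (by positivity : 0 < s ^ 2)] at h3
  have hs4 : s ^ 4 ≤ s ^ 3 := pow_le_pow_of_le_one hs.le hs1 (by norm_num)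
  have h3' : |s ^ 2 / 2 * ((k2 0 c a (1 / (r + s ^ 2)) - k1 0 c a (1 / (r + s ^ 2))) -
      (k2 0 c a (1 / r) - k1 0 c a (1 / r)))| ≤ 8 * (1 / r) * s ^ 4 := by
    rw [abs_mul, abs_of_pos (by positivity : 0 < s ^ 2 / 2)]
    calc _ ≤ s ^ 2 / 2 * (16 * (1 / r) * s ^ 2) := by gcongr
      _ = _ := by ring
  have e : s ^ 2 * (-k1 0 c a (1 / r) / r) = -(s ^ 2 * (k1 0 c a (1 / r) * (1 / r))) := by ring
  rw [e] at h2
  have tot : |∫ x, k0 0 c a (Real.exp (s * x - s ^ 2 / 2) / (r + s ^ 2)) ∂gam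
      - (k0 0 c a (1 / r) - s ^ 2 * (k1 0 c a (1 / r) * (1 / r))
        + s ^ 2 / 2 * (k2 0 c a (1 / r) - k1 0 c a (1 / r)))|
      ≤ C0 * s ^ 3 + 4 * (1 / r) ^ 2 * s ^ 4 + 8 * (1 / r) * s ^ 4 := by
    have e4 : 4 * (1 / r) ^ 2 * (s ^ 2) ^ 2 = 4 * (1 / r) ^ 2 * s ^ 4 := by ring
    rw [e4] at h2
    rw [abs_le] at *
    constructor <;> linarith
  have hy0 : 0 ≤ 2 * (1 / r) := by positivity
  obtain ⟨d0, d1, d2, -, -⟩ := exp_bounds hy0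
  set E := Real.exp (-(2 * (1 / r)))
  have hE : 0 < E := Real.exp_pos _
  have hs4p : 0 < s ^ 4 := by positivity
  have hs3p : 0 < s ^ 3 := by positivity
  calc _ ≤ E * (C0 * s ^ 3 + 4 * (1 / r) ^ 2 * s ^ 4 + 8 * (1 / r) * s ^ 4) := by gcongr
    _ = E * (C0 * s ^ 3) + ((2 * (1 / r)) ^ 2 * E) * s ^ 4 + 4 * (2 * (1 / r) * E) * s ^ 4 := by ring
    _ ≤ 1 * (C0 * s ^ 3) + 2 * s ^ 4 + 4 * 1 * s ^ 4 := by
      have := C0_pos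
      gcongr
    _ ≤ _ := by nlinarith

end onestep

/-- one step of the discretised chain with drift sign `σ` -/
def chainOp (σ s : ℝ) (q : ℝ → ℝ) (r : ℝ) : ℝ :=
  ∫ x, q ((r + σ * s ^ 2) / Real.exp (s * x - s ^ 2 / 2)) ∂gam

def eop (q : ℝ → ℝ) (r : ℝ) : ℝ := if 0 < r then Real.exp (-(2 * (1 / r))) * q r else 0

def gfun (c a r : ℝ) : ℝ := Real.exp (-(c / (r + a)))

lemma k0_eq {α c a θ m : ℝ} (hθ : 0 < θ) (hm : 0 < m) (ha : 0 ≤ a) :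
    k0 α c a (m / θ) = Real.exp (-(α * (1 / (θ / m)))) * gfun c a (θ / m) := by
  unfold k0 kv0 kw gfun
  rw [← Real.exp_add]
  congr 1
  have : 0 < θ + a * m := by positivity
  field_simp
  ring

lemma gfun_bound {c a r : ℝ} (hc : 0 ≤ c) (ha : 0 ≤ a) (hr : 0 < r) : |gfun c a r| ≤ 1 := by
  unfold gfun
  rw [abs_of_pos (Real.exp_pos _)]
  exact Real.exp_le_one_iff.2 (neg_nonpos.2 (by positivity))

lemma one_step {c a s : ℝ} (hc : 0 ≤ c) (ha : 0 ≤ a) (hs : 0 < s) (hs1 : s ≤ 1) (r : ℝ) :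
    |chainOp (-1) s (eop (gfun c a)) r - eop (chainOp 1 s (gfun c a)) r| ≤ (2 * C0 + 28) * s ^ 3 := by
  have hC := C0_pos
  by_cases hr : 0 < r
  · have ep : eop (chainOp 1 s (gfun c a)) r = Real.exp (-(2 * (1 / r))) *
        ∫ x, k0 0 c a (Real.exp (s * x - s ^ 2 / 2) / (r + s ^ 2)) ∂gam := by
      unfold eop chainOp
      rw [if_pos hr]
      congr 1
      refine integral_congr_ae (Filter.Eventually.of_forall fun x => ?_)
      simp only [one_mul]
      rw [k0_eq (by positivity) (Real.exp_pos _) ha]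
      simp
    by_cases hr2 : s ^ 2 < r
    · have em : chainOp (-1) s (eop (gfun c a)) r =
        ∫ x, k0 2 c a (Real.exp (s * x - s ^ 2 / 2) / (r - s ^ 2)) ∂gam := by
        unfold eop chainOp
        refine integral_congr_ae (Filter.Eventually.of_forall fun x => ?_)
        have : r + -1 * s ^ 2 = r - s ^ 2 := by ring
        have h0 : 0 < r - s ^ 2 := by linarith
        simp only [this]
        rw [k0_eq h0 (Real.exp_pos _) ha, if_pos (by positivity)]
      rw [em, ep]
      have h1 := minus_est hc ha hs hs1 hr2
      have h2 := plus_est hc ha hs hs1 hr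
      rw [k_id] at h1
      rw [← abs_of_pos (Real.exp_pos (-(2 * (1 / r)))), ← abs_mul, mul_sub] at h2
      rw [abs_le] at *
      constructor <;> linarith
    · have em : chainOp (-1) s (eop (gfun c a)) r = 0 := by
        unfold eop chainOp
        refine integral_eq_zero_of_ae (Filter.Eventually.of_forall fun x => ?_)
        simp only [Pi.zero_apply]
        rw [if_neg]
        rw [not_lt]
        exact div_nonpos_of_nonpos_of_nonneg (by linarith) (Real.exp_pos _).le
      rw [em, ep, zero_sub, abs_neg, abs_mul, abs_of_pos (Real.exp_pos _)]
      have b : |∫ x, k0 0 c a (Real.exp (s * x - s ^ 2 / 2) / (r + s ^ 2)) ∂gam| ≤ 1 := by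
        have := norm_integral_le_of_norm_le_const (μ := gam) (C := 1)
          (f := fun x => k0 0 c a (Real.exp (s * x - s ^ 2 / 2) / (r + s ^ 2)))
          (Filter.Eventually.of_forall fun x => k0_bound le_rfl hc ha (by positivity))
        simpa using this
      have hy0 : 0 ≤ 2 * (1 / r) := by positivity
      obtain ⟨d0, d1, d2, -, -⟩ := exp_bounds hy0
      have hE := Real.exp_pos (-(2 * (1 / r)))
      have : Real.exp (-(2 * (1 / r))) ≤ s ^ 3 := by
        have e2 : (2 * (1 / r)) ^ 2 * Real.exp (-(2 * (1 / r))) =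
          4 * Real.exp (-(2 * (1 / r))) / r ^ 2 := by ring
        rw [e2, div_le_iff₀ (by positivity)] at d2
        have hs4 : s ^ 4 ≤ s ^ 3 := pow_le_pow_of_le_one hs.le hs1 (by norm_num)
        have : r ^ 2 ≤ (s ^ 2) ^ 2 := by gcongr; linarith
        nlinarith
      have hs3 : 0 < s ^ 3 := by positivity
      calc _ ≤ s ^ 3 * 1 := by gcongr
        _ ≤ _ := by nlinarith
  · have em : chainOp (-1) s (eop (gfun c a)) r = 0 := by
      unfold eop chainOp
      refine integral_eq_zero_of_ae (Filter.Eventually.of_forall fun x => ?_)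
      simp only [Pi.zero_apply]
      rw [if_neg]
      rw [not_lt]
      exact div_nonpos_of_nonpos_of_nonneg (by nlinarith) (Real.exp_pos _).le
    have ep : eop (chainOp 1 s (gfun c a)) r = 0 := if_neg hr
    rw [em, ep]
    simp
    positivity

section chain

lemma chainOp_meas {σ s : ℝ} {q : ℝ → ℝ} (hq : Measurable q) : Measurable (chainOp σ s q) := by
  have : Measurable (fun p : ℝ × ℝ => q ((p.1 + σ * s ^ 2) / Real.exp (s * p.2 - s ^ 2 / 2))) :=
    hq.comp (by fun_prop)
  exact (this.stronglyMeasurable.integral_prod_right (ν := gam)).measurable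

lemma chainOp_bound {σ s C : ℝ} {q : ℝ → ℝ} (hb : ∀ r, |q r| ≤ C) (r : ℝ) :
    |chainOp σ s q r| ≤ C := by
  have := norm_integral_le_of_norm_le_const (μ := gam) (C := C)
    (f := fun x => q ((r + σ * s ^ 2) / Real.exp (s * x - s ^ 2 / 2)))
    (Filter.Eventually.of_forall fun x => hb _)
  simpa [chainOp] using this

lemma chainOp_integrable {σ s C r : ℝ} {q : ℝ → ℝ} (hq : Measurable q) (hb : ∀ r, |q r| ≤ C) :
    Integrable (fun x => q ((r + σ * s ^ 2) / Real.exp (s * x - s ^ 2 / 2))) gam :=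
  Integrable.of_bound (hq.comp (by fun_prop)).aestronglyMeasurable C
    (Filter.Eventually.of_forall fun x => hb _)

lemma chainOp_sub {σ s C r D : ℝ} {q q' : ℝ → ℝ} (hq : Measurable q) (hb : ∀ r, |q r| ≤ C)
    (hq' : Measurable q') (hb' : ∀ r, |q' r| ≤ C) (hd : ∀ r, |q r - q' r| ≤ D) :
    |chainOp σ s q r - chainOp σ s q' r| ≤ D := by
  unfold chainOp
  rw [← integral_sub (chainOp_integrable hq hb) (chainOp_integrable hq' hb')]
  have := norm_integral_le_of_norm_le_const (μ := gam) (C := D)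
    (f := fun x => q ((r + σ * s ^ 2) / Real.exp (s * x - s ^ 2 / 2))
      - q' ((r + σ * s ^ 2) / Real.exp (s * x - s ^ 2 / 2)))
    (Filter.Eventually.of_forall fun x => hd _)
  simpa using this

lemma chainOp_iter_meas {σ s : ℝ} {q : ℝ → ℝ} (hq : Measurable q) (n : ℕ) :
    Measurable ((chainOp σ s)^[n] q) := by
  induction n with
  | zero => exact hq
  | succ n ih => rw [Function.iterate_succ_apply']; exact chainOp_meas ih

lemma chainOp_iter_bound {σ s C : ℝ} {q : ℝ → ℝ} (hb : ∀ r, |q r| ≤ C) (n : ℕ) :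
    ∀ r, |(chainOp σ s)^[n] q r| ≤ C := by
  induction n with
  | zero => exact hb
  | succ n ih => rw [Function.iterate_succ_apply']; exact chainOp_bound ih

lemma eop_meas {q : ℝ → ℝ} (hq : Measurable q) : Measurable (eop q) := by
  unfold eop
  exact Measurable.ite measurableSet_Ioi (by fun_prop) measurable_const

lemma eop_bound {q : ℝ → ℝ} {C : ℝ} (hC : 0 ≤ C) (hb : ∀ r, 0 < r → |q r| ≤ C) (r : ℝ) :
    |eop q r| ≤ C := by
  unfold eop
  split_ifs with h
  · rw [abs_mul, abs_of_pos (Real.exp_pos _)]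
    have : Real.exp (-(2 * (1 / r))) ≤ 1 := Real.exp_le_one_iff.2 (neg_nonpos.2 (by positivity))
    calc _ ≤ 1 * C := by gcongr; exact hb r h
      _ = C := one_mul _
  · simpa using hC

variable {Ω : Type*} [MeasurableSpace Ω] {P : Measure Ω}

lemma mix_step [IsProbabilityMeasure P] {c a : Ω → ℝ} (hcm : Measurable c) (ham : Measurable a)
    (hc : ∀ ω, 0 ≤ c ω) (ha : ∀ ω, 0 ≤ a ω) {q : ℝ → ℝ}
    (hq : ∀ r, 0 < r → q r = ∫ ω, gfun (c ω) (a ω) r ∂P) {s : ℝ} (hs : 0 < s) (hs1 : s ≤ 1)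
    (r : ℝ) :
    |chainOp (-1) s (eop q) r - eop (chainOp 1 s q) r| ≤ (2 * C0 + 28) * s ^ 3 := by
  have hg : Measurable (fun p : ℝ × Ω => gfun (c p.2) (a p.2) p.1) := by
    unfold gfun; fun_prop
  have he : Measurable (fun p : ℝ × Ω => eop (gfun (c p.2) (a p.2)) p.1) := by
    unfold eop
    exact Measurable.ite (measurableSet_lt measurable_const measurable_fst)
      (Measurable.mul (by fun_prop) hg) measurable_const
  have heq : ∀ r, eop q r = ∫ ω, eop (gfun (c ω) (a ω)) r ∂P := by
    intro r
    unfold eop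
    split_ifs with h
    · rw [integral_const_mul, hq r h]
    · simp
  have hb : ∀ ω r, |eop (gfun (c ω) (a ω)) r| ≤ 1 := fun ω =>
    eop_bound zero_le_one fun r hr => gfun_bound (hc ω) (ha ω) hr
  -- minus side
  have I1 : Integrable (Function.uncurry fun x ω => eop (gfun (c ω) (a ω))
      ((r + -1 * s ^ 2) / Real.exp (s * x - s ^ 2 / 2))) (gam.prod P) := by
    refine Integrable.of_bound (Measurable.aestronglyMeasurable ?_) 1
      (Filter.Eventually.of_forall fun p => hb _ _)
    exact he.comp (f := fun p : ℝ × Ω =>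
      ((r + -1 * s ^ 2) / Real.exp (s * p.1 - s ^ 2 / 2), p.2)) (by fun_prop)
  have m1 : chainOp (-1) s (eop q) r = ∫ ω, chainOp (-1) s (eop (gfun (c ω) (a ω))) r ∂P := by
    unfold chainOp
    rw [← integral_integral_swap I1]
    simp only [heq]
  have J1 : Integrable (fun ω => chainOp (-1) s (eop (gfun (c ω) (a ω))) r) P :=
    I1.integral_prod_right
  have m2 : eop (chainOp 1 s q) r = ∫ ω, eop (chainOp 1 s (gfun (c ω) (a ω))) r ∂P ∧
      Integrable (fun ω => eop (chainOp 1 s (gfun (c ω) (a ω))) r) P := by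
    by_cases hr : 0 < r
    · have hp : ∀ x, 0 < (r + 1 * s ^ 2) / Real.exp (s * x - s ^ 2 / 2) := fun x => by positivity
      have I2 : Integrable (Function.uncurry fun x ω => gfun (c ω) (a ω)
          ((r + 1 * s ^ 2) / Real.exp (s * x - s ^ 2 / 2))) (gam.prod P) := by
        refine Integrable.of_bound (Measurable.aestronglyMeasurable ?_) 1
          (Filter.Eventually.of_forall fun p => gfun_bound (hc _) (ha _) (hp _))
        exact hg.comp (f := fun p : ℝ × Ω =>
          ((r + 1 * s ^ 2) / Real.exp (s * p.1 - s ^ 2 / 2), p.2)) (by fun_prop)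
      unfold eop
      simp only [if_pos hr]
      refine ⟨?_, (I2.integral_prod_right).const_mul _⟩
      rw [integral_const_mul]
      congr 1
      unfold chainOp
      rw [← integral_integral_swap I2]
      refine integral_congr_ae (Filter.Eventually.of_forall fun x => ?_)
      exact hq _ (hp x)
    · unfold eop
      simp [if_neg hr]
  rw [m1, m2.1, ← integral_sub J1 m2.2]
  have := norm_integral_le_of_norm_le_const (μ := P) (C := (2 * C0 + 28) * s ^ 3)
    (f := fun ω => chainOp (-1) s (eop (gfun (c ω) (a ω))) r
      - eop (chainOp 1 s (gfun (c ω) (a ω))) r)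
    (Filter.Eventually.of_forall fun ω => one_step (hc ω) (ha ω) hs hs1 r)
  simpa using this

/-- discretised martingale and its running sum -/
def Mk {Ω : Type*} (B : ℝ → Ω → ℝ) (h : ℝ) (k : ℕ) (ω : Ω) : ℝ := Real.exp (B (k * h) ω - k * h / 2)

def Sk {Ω : Type*} (B : ℝ → Ω → ℝ) (h : ℝ) (n : ℕ) (ω : Ω) : ℝ := h * ∑ k ∈ Finset.range n, Mk B h k ω

variable {B : ℝ → Ω → ℝ}

lemma Mk_meas (hB : IsBrownianMotion P B) (h : ℝ) (k : ℕ) : Measurable (Mk B h k) := by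
  have := hB.measurable (k * h)
  unfold Mk; fun_prop

lemma Sk_meas (hB : IsBrownianMotion P B) (h : ℝ) (k : ℕ) : Measurable (Sk B h k) := by
  have := Mk_meas hB h
  unfold Sk; fun_prop

lemma incr_indep (hB : IsBrownianMotion P B) {h : ℝ} (hh : 0 ≤ h) (σ u : ℝ) (n : ℕ) :
    IndepFun (fun ω => (u + σ * Sk B h n ω) / Mk B h n ω)
      (fun ω => B ((n + 1 : ℕ) * h) ω - B (n * h) ω) P := by
  have hI := hB.indep_increments (fun n => n * h)
    (fun i j hij => by dsimp only; gcongr) (by simp)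
  have hm : ∀ i : ℕ, Measurable fun ω => B ((i + 1 : ℕ) * h) ω - B (i * h) ω := fun i =>
    (hB.measurable _).sub (hB.measurable _)
  have h2 := hI.indepFun_finset (Finset.range n) {n} (by simp) hm
  let ext : ((Finset.range n) → ℝ) → ℕ → ℝ := fun x i =>
    if hi : i ∈ Finset.range n then x ⟨i, hi⟩ else 0
  have hext : ∀ i, Measurable fun x => ext x i := by
    intro i
    by_cases hi : i ∈ Finset.range n
    · simp only [ext, dif_pos hi]; fun_prop
    · simp only [ext, dif_neg hi]; fun_prop
  let mk : ((Finset.range n) → ℝ) → ℕ → ℝ := fun x k =>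
    Real.exp (∑ i ∈ Finset.range k, ext x i - k * h / 2)
  have hmk : ∀ i, Measurable fun x => mk x i := by
    intro i
    simp only [mk]; fun_prop
  let Φ : ((Finset.range n) → ℝ) → ℝ := fun x =>
    (u + σ * (h * ∑ k ∈ Finset.range n, mk x k)) / mk x n
  have hΦ : Measurable Φ := by simp only [Φ]; fun_prop
  have hsum : ∀ ω, ∀ k ≤ n, ∑ i ∈ Finset.range k,
      ext (fun i : Finset.range n => B ((i.1 + 1 : ℕ) * h) ω - B (i.1 * h) ω) i = B (k * h) ω := by
    intro ω k hk
    rw [Finset.sum_congr rfl (g := fun i : ℕ => B ((i + 1 : ℕ) * h) ω - B (i * h) ω)]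
    · rw [Finset.sum_range_sub (fun i : ℕ => B (i * h) ω)]
      simp [hB.start]
    · intro i hi
      have : i ∈ Finset.range n := Finset.mem_range.2 ((Finset.mem_range.1 hi).trans_le hk)
      simp only [ext, dif_pos this]
  have h3 := h2.comp hΦ (measurable_pi_apply (⟨n, Finset.mem_singleton_self n⟩ : ({n} : Finset ℕ)))
  convert h3 using 1
  · funext ω
    simp only [Function.comp, Φ, mk, Sk, Mk]
    rw [hsum ω n le_rfl]
    congr 4
    refine Finset.sum_congr rfl fun k hk => ?_
    rw [hsum ω k (Finset.mem_range.1 hk).le]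
  · rfl

lemma rep_step (hB : IsBrownianMotion P B) {s : ℝ} (σ u : ℝ) (n : ℕ)
    {q : ℝ → ℝ} (hq : Measurable q) {C : ℝ} (hb : ∀ r, |q r| ≤ C) :
    ∫ ω, q ((u + σ * Sk B (s ^ 2) (n + 1) ω) / Mk B (s ^ 2) (n + 1) ω) ∂P
    = ∫ ω, chainOp σ s q ((u + σ * Sk B (s ^ 2) n ω) / Mk B (s ^ 2) n ω) ∂P := by
  have := hB.isProbabilityMeasure
  set h := s ^ 2 with hh
  have h0 : 0 ≤ h := sq_nonneg s
  set X := fun ω => (u + σ * Sk B h n ω) / Mk B h n ω with hX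
  set D := fun ω => B ((n + 1 : ℕ) * h) ω - B (n * h) ω with hD
  have hXm : Measurable X := by
    have := Sk_meas hB h n
    have := Mk_meas hB h n
    simp only [hX]; fun_prop
  have hDm : Measurable D := (hB.measurable _).sub (hB.measurable _)
  have hDlaw : P.map D = gam.map (fun x => s * x) := by
    rw [hD, hB.gaussian_increments _ _ (by positivity) (by push_cast; nlinarith),
      gaussianReal_map_const_mul]
    congr 1
    · simp
    · ext
      push_cast
      rw [Real.coe_toNNReal _ (by nlinarith)]
      simp
      ring
  have hind := incr_indep hB h0 σ u n
  have hpair : P.map (fun ω => (X ω, D ω)) = (P.map X).prod (gam.map (fun x => s * x)) := by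
    rw [← hDlaw]
    exact (indepFun_iff_map_prod_eq_prod_map_map hXm.aemeasurable hDm.aemeasurable).1 hind
  have hrec : ∀ ω, (u + σ * Sk B h (n + 1) ω) / Mk B h (n + 1) ω
      = (X ω + σ * h) / Real.exp (D ω - h / 2) := by
    intro ω
    have e1 : Mk B h (n + 1) ω = Mk B h n ω * Real.exp (D ω - h / 2) := by
      simp only [Mk, hD, ← Real.exp_add]
      congr 1
      push_cast
      ring
    have e2 : Sk B h (n + 1) ω = Sk B h n ω + h * Mk B h n ω := by
      simp only [Sk, Finset.sum_range_succ]; ring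
    have p1 : 0 < Mk B h n ω := Real.exp_pos _
    have p2 := Real.exp_pos (D ω - h / 2)
    rw [e1, e2]
    simp only [hX]
    field_simp
    ring
  have hF : Measurable (fun p : ℝ × ℝ => q ((p.1 + σ * h) / Real.exp (p.2 - h / 2))) :=
    hq.comp (by fun_prop)
  have : IsProbabilityMeasure (P.map X) := Measure.isProbabilityMeasure_map hXm.aemeasurable
  have : IsProbabilityMeasure (gam.map (fun x => s * x)) :=
    Measure.isProbabilityMeasure_map (by fun_prop)
  calc _ = ∫ ω, (fun p : ℝ × ℝ => q ((p.1 + σ * h) / Real.exp (p.2 - h / 2))) (X ω, D ω) ∂P := by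
        simp only [hrec]
    _ = ∫ p, q ((p.1 + σ * h) / Real.exp (p.2 - h / 2)) ∂((P.map X).prod (gam.map (fun x => s * x))) := by
        rw [← hpair, integral_map (hXm.prodMk hDm).aemeasurable hF.aestronglyMeasurable]
    _ = ∫ y, ∫ z, q ((y + σ * h) / Real.exp (z - h / 2)) ∂(gam.map (fun x => s * x)) ∂(P.map X) := by
        rw [integral_prod]
        exact Integrable.of_bound hF.aestronglyMeasurable C
          (Filter.Eventually.of_forall fun p => hb _)
    _ = ∫ y, chainOp σ s q y ∂(P.map X) := by
        refine integral_congr_ae (Filter.Eventually.of_forall fun y => ?_)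
        have : Measurable (fun z : ℝ => q ((y + σ * h) / Real.exp (z - h / 2))) :=
          hq.comp (by fun_prop)
        simp only [chainOp]
        rw [integral_map (by fun_prop) this.aestronglyMeasurable]
    _ = _ := by
        rw [integral_map hXm.aemeasurable (chainOp_meas hq).aestronglyMeasurable]

lemma rep (hB : IsBrownianMotion P B) {s : ℝ} (σ u : ℝ) (n : ℕ) {C : ℝ} :
    ∀ {q : ℝ → ℝ}, Measurable q → (∀ r, |q r| ≤ C) →
    (chainOp σ s)^[n] q u =
      ∫ ω, q ((u + σ * Sk B (s ^ 2) n ω) / Mk B (s ^ 2) n ω) ∂P := by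
  have := hB.isProbabilityMeasure
  induction n with
  | zero => intro q _ _; simp [Sk, Mk, hB.start]
  | succ n ih =>
    intro q hq hb
    rw [Function.iterate_succ_apply, ih (chainOp_meas hq) (chainOp_bound hb),
      rep_step hB σ u n hq hb]

def fpos (c r : ℝ) : ℝ := if 0 < r then Real.exp (-(c / r)) else 0

lemma fpos_meas (c : ℝ) : Measurable (fpos c) :=
  Measurable.ite measurableSet_Ioi (by fun_prop) measurable_const

lemma fpos_nonneg (c r : ℝ) : 0 ≤ fpos c r := by
  unfold fpos; split_ifs <;> positivity

lemma fpos_bound {c : ℝ} (hc : 0 ≤ c) (r : ℝ) : |fpos c r| ≤ 1 := by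
  unfold fpos
  split_ifs with h
  · rw [abs_of_pos (Real.exp_pos _)]
    exact Real.exp_le_one_iff.2 (neg_nonpos.2 (by positivity))
  · simp

lemma Sk_nonneg {h : ℝ} (hh : 0 ≤ h) (n : ℕ) (ω : Ω) : 0 ≤ Sk B h n ω :=
  mul_nonneg hh (Finset.sum_nonneg fun k _ => (Real.exp_pos _).le)

lemma telescope (hB : IsBrownianMotion P B) {s : ℝ} (hs : 0 < s) (hs1 : s ≤ 1) {c : ℝ}
    (hc : 0 ≤ c) (n : ℕ) :
    ∀ u, |(chainOp (-1) s)^[n] (eop (fpos c)) u - eop ((chainOp 1 s)^[n] (fpos c)) u|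
      ≤ n * ((2 * C0 + 28) * s ^ 3) := by
  have := hB.isProbabilityMeasure
  have hm0 : Measurable (eop (fpos c)) := eop_meas (fpos_meas c)
  have hb0 : ∀ r, |eop (fpos c) r| ≤ 1 := eop_bound zero_le_one fun r _ => fpos_bound hc r
  induction n with
  | zero => intro u; simp
  | succ n ih =>
    intro u
    rw [Function.iterate_succ_apply', Function.iterate_succ_apply']
    have hmix := mix_step (P := P) (c := fun ω => c * Mk B (s ^ 2) n ω) (a := Sk B (s ^ 2) n)
      ((Mk_meas hB _ n).const_mul c) (Sk_meas hB _ n)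
      (fun ω => mul_nonneg hc (Real.exp_pos _).le) (Sk_nonneg (sq_nonneg s) n)
      (q := (chainOp 1 s)^[n] (fpos c)) (by
        intro r hr
        rw [rep hB 1 r n (fpos_meas c) (fpos_bound hc)]
        refine integral_congr_ae (Filter.Eventually.of_forall fun ω => ?_)
        have p1 : 0 < Mk B (s ^ 2) n ω := Real.exp_pos _
        have p2 : 0 ≤ Sk B (s ^ 2) n ω := Sk_nonneg (sq_nonneg s) n ω
        simp only [fpos, gfun, one_mul]
        rw [if_pos (by positivity)]
        congr 2
        field_simp) hs hs1 u
    have hd : |chainOp (-1) s ((chainOp (-1) s)^[n] (eop (fpos c))) u -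
        chainOp (-1) s (eop ((chainOp 1 s)^[n] (fpos c))) u| ≤ n * ((2 * C0 + 28) * s ^ 3) := by
      exact chainOp_sub (chainOp_iter_meas hm0 n) (chainOp_iter_bound hb0 n)
        (eop_meas (chainOp_iter_meas (fpos_meas c) n))
        (eop_bound zero_le_one fun r _ => chainOp_iter_bound (fpos_bound hc) n r) ih
    push_cast
    rw [abs_le] at *
    constructor <;> linarith

end chain
section limit

open Filter Topology

variable {Ω : Type*} [MeasurableSpace Ω] {P : Measure Ω} {B : ℝ → Ω → ℝ}

lemma riemann_lim {f : ℝ → ℝ} (hf : Continuous f) {t : ℝ} (ht : 0 < t) :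
    Tendsto (fun n : ℕ => t / n * ∑ k ∈ Finset.range n, f (k * (t / n))) atTop
      (𝓝 (∫ s in (0 : ℝ)..t, f s)) := by
  rw [Metric.tendsto_atTop]
  intro ε hε
  have huc : UniformContinuousOn f (Set.Icc 0 t) :=
    isCompact_Icc.uniformContinuousOn_of_continuous hf.continuousOn
  rw [Metric.uniformContinuousOn_iff] at huc
  obtain ⟨δ, hδ, hd⟩ := huc (ε / (2 * t)) (by positivity)
  obtain ⟨N, hN⟩ := exists_nat_gt (t / δ)
  refine ⟨N + 1, fun n hn => ?_⟩
  have hn0 : (0 : ℝ) < n := by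
    have : 0 < n := by omega
    exact_mod_cast this
  have hnN : (N : ℝ) ≤ n := by
    have : N ≤ n := by omega
    exact_mod_cast this
  set h := t / n with hh
  have h0 : 0 < h := by positivity
  have hnh : n * h = t := by rw [hh]; field_simp
  have hhδ : h < δ := by
    rw [hh, div_lt_iff₀ hn0]
    rw [div_lt_iff₀ hδ] at hN
    nlinarith
  have hfint : ∀ a b, IntervalIntegrable f volume a b := fun a b => hf.intervalIntegrable a b
  have hsum := intervalIntegral.sum_integral_adjacent_intervals (f := f) (μ := volume)
    (a := fun k : ℕ => (k : ℝ) * h) (n := n) (fun k _ => hfint _ _)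
  simp only [Nat.cast_zero, zero_mul, hnh] at hsum
  rw [Real.dist_eq, ← hsum, Finset.mul_sum, ← Finset.sum_sub_distrib]
  have hk : ∀ k ∈ Finset.range n, |h * f (k * h) - ∫ s in (k * h)..((k + 1 : ℕ) * h), f s|
      ≤ ε / (2 * t) * h := by
    intro k hk
    have hkn : ((k : ℝ) + 1) ≤ n := by exact_mod_cast Finset.mem_range.1 hk
    have e : h * f (k * h) - ∫ s in (k * h)..((k + 1 : ℕ) * h), f s
        = ∫ s in (k * h)..((k + 1 : ℕ) * h), (f (k * h) - f s) := by
      rw [intervalIntegral.integral_sub (by simp) (hfint _ _), intervalIntegral.integral_const]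
      push_cast
      rw [smul_eq_mul]; ring
    rw [e]
    have := intervalIntegral.norm_integral_le_of_norm_le_const (a := k * h) (b := (k + 1 : ℕ) * h)
      (f := fun s => f (k * h) - f s) (C := ε / (2 * t)) (by
        intro s hs
        rw [Set.uIoc_of_le (by push_cast; nlinarith)] at hs
        obtain ⟨h1, h2⟩ := hs
        push_cast at h2
        have hk0 : 0 ≤ (k : ℝ) * h := by positivity
        have hkt : (k : ℝ) * h + h ≤ t := by rw [← hnh]; nlinarith
        have := hd (k * h) ⟨hk0, by linarith⟩ s ⟨by linarith, by linarith⟩ (by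
          rw [Real.dist_eq, abs_lt]; constructor <;> linarith)
        rw [Real.dist_eq] at this
        exact this.le)
    rw [Real.norm_eq_abs] at this
    refine this.trans (le_of_eq ?_)
    push_cast
    rw [show ((k : ℝ) + 1) * h - k * h = h by ring, abs_of_pos h0]
  refine (Finset.abs_sum_le_sum_abs _ _).trans_lt ((Finset.sum_le_sum hk).trans_lt ?_)
  rw [Finset.sum_const, Finset.card_range, nsmul_eq_mul]
  have : (n : ℝ) * (ε / (2 * t) * h) = ε / 2 := by
    rw [show (n : ℝ) * (ε / (2 * t) * h) = ε / (2 * t) * (n * h) by ring, hnh]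
    field_simp
  rw [this]; linarith

lemma Sk_tendsto (hB : IsBrownianMotion P B) {t : ℝ} (ht : 0 < t) (ω : Ω) :
    Tendsto (fun n : ℕ => Sk B (t / n) n ω) atTop (𝓝 (A B t ω)) := by
  have hc := hB.continuous_paths ω
  exact riemann_lim (f := fun s => Real.exp (B s ω - s / 2)) (by fun_prop) ht

lemma Mk_eq {t : ℝ} (n : ℕ) (hn : n ≠ 0) (ω : Ω) : Mk B (t / n) n ω = M B t ω := by
  have : (n : ℝ) ≠ 0 := by exact_mod_cast hn
  simp only [Mk, M]
  rw [show (n : ℝ) * (t / n) = t by field_simp]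

lemma A_meas (hB : IsBrownianMotion P B) {t : ℝ} (ht : 0 < t) : Measurable (A B t) :=
  measurable_of_tendsto_metrizable (fun n : ℕ => Sk_meas hB (t / n) n)
    (tendsto_pi_nhds.2 fun ω => Sk_tendsto hB ht ω)

lemma M_meas (hB : IsBrownianMotion P B) (t : ℝ) : Measurable (M B t) := by
  have := hB.measurable t
  unfold M; fun_prop

lemma M_pos (t : ℝ) (ω : Ω) : 0 < M B t ω := Real.exp_pos _

lemma A_nonneg {t : ℝ} (ht : 0 < t) (ω : Ω) : 0 ≤ A B t ω :=
  intervalIntegral.integral_nonneg ht.le fun _ _ => (Real.exp_pos _).le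

lemma fpos_cont {c : ℝ} (hc : 0 < c) : Continuous (fpos c) := by
  rw [continuous_iff_continuousAt]
  intro r
  rcases lt_trichotomy r 0 with h | h | h
  · have : fpos c =ᶠ[𝓝 r] fun _ => 0 := by
      filter_upwards [eventually_lt_nhds h] with x hx
      simp [fpos, hx.le]
    exact continuousAt_const.congr this.symm
  · subst h
    rw [ContinuousAt, show fpos c 0 = 0 by simp [fpos]]
    have hb : ∀ x, |fpos c x| ≤ |x| / c := by
      intro x
      unfold fpos
      split_ifs with hx
      · rw [abs_of_pos (Real.exp_pos _), abs_of_pos hx, Real.exp_neg]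
        have h1 : c / x ≤ Real.exp (c / x) := by linarith [Real.add_one_le_exp (c / x)]
        calc (Real.exp (c / x))⁻¹ ≤ (c / x)⁻¹ := by gcongr
          _ = x / c := by field_simp
      · simp; positivity
    refine squeeze_zero_norm hb ?_
    have : Continuous fun x : ℝ => |x| / c := by fun_prop
    simpa using this.tendsto 0
  · have : fpos c =ᶠ[𝓝 r] fun x => Real.exp (-(c / x)) := by
      filter_upwards [eventually_gt_nhds h] with x hx
      simp [fpos, hx]
    refine ContinuousAt.congr ?_ this.symm
    fun_prop (disch := exact h.ne')

lemma eop_fpos (c : ℝ) : eop (fpos c) = fpos (c + 2) := by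
  funext r
  simp only [eop, fpos]
  split_ifs with h
  · rw [← Real.exp_add]; congr 1; field_simp; ring
  · rfl

lemma key_identity (hB : IsBrownianMotion P B) {t : ℝ} (ht : 0 < t) {c : ℝ} (hc : 0 ≤ c)
    {u : ℝ} (hu : 0 < u) :
    Real.exp (-(2 / u)) * ∫ ω, Real.exp (-(c * (M B t ω / (u + A B t ω)))) ∂P
      = ∫ ω, fpos (c + 2) ((u - A B t ω) / M B t ω) ∂P := by
  have := hB.isProbabilityMeasure
  have hA := A_meas hB ht
  have hM := M_meas hB t
  let sn : ℕ → ℝ := fun n => Real.sqrt (t / n)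
  have hsq : ∀ n, sn n ^ 2 = t / n := fun n => Real.sq_sqrt (by positivity)
  -- the two sides at level n
  have hL : ∀ n : ℕ, (chainOp (-1) (sn n))^[n] (eop (fpos c)) u
      = ∫ ω, fpos (c + 2) ((u - Sk B (t / n) n ω) / Mk B (t / n) n ω) ∂P := by
    intro n
    rw [eop_fpos, rep hB (-1) u n (fpos_meas _) (fpos_bound (by linarith)), hsq]
    simp only [neg_one_mul, sub_eq_add_neg]
  have hR : ∀ n : ℕ, eop ((chainOp 1 (sn n))^[n] (fpos c)) u
      = Real.exp (-(2 / u)) *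
        ∫ ω, Real.exp (-(c * (Mk B (t / n) n ω / (u + Sk B (t / n) n ω)))) ∂P := by
    intro n
    simp only [eop]
    rw [if_pos hu, rep hB 1 u n (fpos_meas _) (fpos_bound hc), hsq]
    congr 1
    · congr 1; ring
    · refine integral_congr_ae (Eventually.of_forall fun ω => ?_)
      have p1 : 0 < Mk B (t / n) n ω := Real.exp_pos _
      have p2 : 0 ≤ Sk B (t / n) n ω := Sk_nonneg (by positivity) n ω
      simp only [fpos, one_mul]
      rw [if_pos (by positivity)]
      congr 2
      field_simp
  have hMk : ∀ ω, Tendsto (fun n : ℕ => Mk B (t / n) n ω) atTop (𝓝 (M B t ω)) := fun ω =>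
    tendsto_const_nhds.congr' ((eventually_ne_atTop 0).mono fun n hn => (Mk_eq n hn ω).symm)
  have hLt : Tendsto (fun n : ℕ => (chainOp (-1) (sn n))^[n] (eop (fpos c)) u) atTop
      (𝓝 (∫ ω, fpos (c + 2) ((u - A B t ω) / M B t ω) ∂P)) := by
    simp only [hL]
    refine tendsto_integral_of_dominated_convergence (fun _ => 1) ?_ (integrable_const _) ?_ ?_
    · intro n
      have := Sk_meas hB (t / n) n
      have := Mk_meas hB (t / n) n
      exact ((fpos_meas _).comp (by fun_prop)).aestronglyMeasurable
    · intro n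
      exact Eventually.of_forall fun ω => fpos_bound (by linarith) _
    · refine Eventually.of_forall fun ω => ?_
      exact ((fpos_cont (by linarith)).tendsto _).comp
        ((tendsto_const_nhds.sub (Sk_tendsto hB ht ω)).div (hMk ω) (M_pos t ω).ne')
  have hRt : Tendsto (fun n : ℕ => eop ((chainOp 1 (sn n))^[n] (fpos c)) u) atTop
      (𝓝 (Real.exp (-(2 / u)) * ∫ ω, Real.exp (-(c * (M B t ω / (u + A B t ω)))) ∂P)) := by
    simp only [hR]
    refine Tendsto.const_mul _ ?_
    refine tendsto_integral_of_dominated_convergence (fun _ => 1) ?_ (integrable_const _) ?_ ?_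
    · intro n
      have := Sk_meas hB (t / n) n
      have := Mk_meas hB (t / n) n
      exact Measurable.aestronglyMeasurable (by fun_prop)
    · intro n
      refine Eventually.of_forall fun ω => ?_
      have p1 : 0 < Mk B (t / n) n ω := Real.exp_pos _
      have p2 : 0 ≤ Sk B (t / n) n ω := Sk_nonneg (by positivity) n ω
      rw [Real.norm_eq_abs, abs_of_pos (Real.exp_pos _)]
      exact Real.exp_le_one_iff.2 (neg_nonpos.2 (by positivity))
    · refine Eventually.of_forall fun ω => ?_
      refine (Real.continuous_exp.tendsto _).comp (Tendsto.neg (Tendsto.const_mul _ ?_))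
      exact (hMk ω).div (tendsto_const_nhds.add (Sk_tendsto hB ht ω))
        (by have := A_nonneg (B := B) ht ω; positivity)
  have hs0 : Tendsto sn atTop (𝓝 0) := by
    have h1 : Tendsto (fun n : ℕ => t / (n : ℝ)) atTop (𝓝 0) := tendsto_const_div_atTop_nhds_zero_nat t
    have := (Real.continuous_sqrt.tendsto 0).comp h1
    rwa [Real.sqrt_zero] at this
  have hd0 : Tendsto (fun n : ℕ => (chainOp (-1) (sn n))^[n] (eop (fpos c)) u -
      eop ((chainOp 1 (sn n))^[n] (fpos c)) u) atTop (𝓝 0) := by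
    have hb : Tendsto (fun n : ℕ => (2 * C0 + 28) * t * sn n) atTop (𝓝 0) := by
      simpa using hs0.const_mul ((2 * C0 + 28) * t)
    refine squeeze_zero_norm' ?_ hb
    filter_upwards [eventually_ne_atTop 0, hs0.eventually_le_const (zero_lt_one)] with n hn h1
    have hn' : (0 : ℝ) < n := by exact_mod_cast Nat.pos_of_ne_zero hn
    have hsp : 0 < sn n := Real.sqrt_pos.2 (by positivity)
    refine (telescope hB hsp h1 hc n u).trans (le_of_eq ?_)
    rw [pow_succ, hsq]
    field_simp
  have := tendsto_nhds_unique (hLt.sub hRt) hd0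
  linarith

end limit
section moments

open Filter Topology

variable {Ω : Type*} [MeasurableSpace Ω] {P : Measure Ω} {B : ℝ → Ω → ℝ}

def pK (K : ℕ) : Polynomial ℝ :=
  ∑ k ∈ Finset.range K, Polynomial.C ((k : ℝ) + 1) * (1 - Polynomial.X) ^ k

lemma pK_eval (K : ℕ) (w : ℝ) :
    (pK K).eval w = ∑ k ∈ Finset.range K, ((k : ℝ) + 1) * (1 - w) ^ k := by
  simp [pK, Polynomial.eval_finsetSum]

lemma pK_mono {w : ℝ} (hw : w ≤ 1) : Monotone fun K => (pK K).eval w := by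
  refine monotone_nat_of_le_succ fun K => ?_
  simp only [pK_eval]
  rw [Finset.sum_range_succ]
  have : 0 ≤ 1 - w := by linarith
  have : 0 ≤ ((K : ℝ) + 1) * (1 - w) ^ K := by positivity
  linarith

lemma pK_tendsto {w : ℝ} (hw0 : 0 < w) (hw : w ≤ 1) :
    Tendsto (fun K => (pK K).eval w) atTop (𝓝 ((w ^ 2)⁻¹)) := by
  have hn : ‖1 - w‖ < 1 := by
    rw [Real.norm_eq_abs, abs_lt]; constructor <;> linarith
  have h1 := hasSum_coe_mul_geometric_of_norm_lt_one hn
  have h2 := hasSum_geometric_of_norm_lt_one hn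
  have h3 := (h1.add h2).tendsto_sum_nat
  have e : (1 - w) / (1 - (1 - w)) ^ 2 + (1 - (1 - w))⁻¹ = (w ^ 2)⁻¹ := by
    rw [sub_sub_cancel]; field_simp; ring
  rw [e] at h3
  refine h3.congr fun K => ?_
  rw [pK_eval]
  refine Finset.sum_congr rfl fun k _ => ?_
  ring

lemma pK_nonneg {w : ℝ} (hw : w ≤ 1) (K : ℕ) : 0 ≤ (pK K).eval w := by
  have := pK_mono hw (Nat.zero_le K)
  simpa [pK_eval] using this

lemma pK_le {w : ℝ} (hw0 : 0 < w) (hw : w ≤ 1) (K : ℕ) : (pK K).eval w ≤ (w ^ 2)⁻¹ :=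
  (pK_mono hw).ge_of_tendsto (pK_tendsto hw0 hw) K

lemma moments [IsProbabilityMeasure P] {W V : Ω → ℝ} (hW : Measurable W) (hV : Measurable V)
    (hW0 : ∀ ω, 0 < W ω) (hW1 : ∀ ω, W ω ≤ 1) (hV0 : ∀ ω, 0 ≤ V ω) (hV1 : ∀ ω, V ω ≤ 1)
    {e : ℝ} (he : 0 < e) (h : ∀ n : ℕ, e * ∫ ω, W ω ^ n ∂P = ∫ ω, V ω ^ (n + 2) ∂P) :
    Integrable (fun ω => (W ω ^ 2)⁻¹) P ∧
      e * ∫ ω, (W ω ^ 2)⁻¹ ∂P = P.real {ω | 0 < V ω} := by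
  have hWi : ∀ n : ℕ, Integrable (fun ω => W ω ^ n) P := fun n =>
    Integrable.of_bound (hW.pow_const n).aestronglyMeasurable 1 (Eventually.of_forall fun ω => by
      rw [Real.norm_eq_abs, abs_of_nonneg (pow_nonneg (hW0 ω).le n)]
      exact pow_le_one₀ (hW0 ω).le (hW1 ω))
  have hVi : ∀ n : ℕ, Integrable (fun ω => V ω ^ n) P := fun n =>
    Integrable.of_bound (hV.pow_const n).aestronglyMeasurable 1 (Eventually.of_forall fun ω => by
      rw [Real.norm_eq_abs, abs_of_nonneg (pow_nonneg (hV0 ω) n)]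
      exact pow_le_one₀ (hV0 ω) (hV1 ω))
  have hpW : ∀ p : Polynomial ℝ, Integrable (fun ω => p.eval (W ω)) P := by
    intro p
    simp only [Polynomial.eval_eq_sum_range]
    exact integrable_finsetSum _ fun i _ => (hWi i).const_mul _
  have hpol : ∀ p : Polynomial ℝ,
      e * ∫ ω, p.eval (W ω) ∂P = ∫ ω, V ω ^ 2 * p.eval (V ω) ∂P := by
    intro p
    simp only [Polynomial.eval_eq_sum_range]
    rw [integral_finsetSum _ fun i _ => (hWi i).const_mul _]
    simp only [Finset.mul_sum]
    rw [integral_finsetSum]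
    · refine Finset.sum_congr rfl fun i _ => ?_
      rw [integral_const_mul, mul_left_comm, h i, ← integral_const_mul]
      refine integral_congr_ae (Eventually.of_forall fun ω => ?_)
      simp only; ring
    · intro i _
      refine ((hVi (i + 2)).const_mul (p.coeff i)).congr (Eventually.of_forall fun ω => ?_)
      simp only; ring
  have hmV : MeasurableSet {ω | 0 < V ω} := measurableSet_lt measurable_const hV
  have hlim : Tendsto (fun K => ∫ ω, V ω ^ 2 * (pK K).eval (V ω) ∂P) atTop
      (𝓝 (P.real {ω | 0 < V ω})) := by
    rw [← integral_indicator_one hmV]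
    refine tendsto_integral_of_dominated_convergence (fun _ => 1) ?_ (integrable_const _) ?_ ?_
    · intro K
      have : Measurable fun ω => (pK K).eval (V ω) := (pK K).continuous.measurable.comp hV
      exact ((hV.pow_const 2).mul this).aestronglyMeasurable
    · intro K
      refine Eventually.of_forall fun ω => ?_
      rw [Real.norm_eq_abs, abs_of_nonneg (mul_nonneg (sq_nonneg _) (pK_nonneg (hV1 ω) K))]
      rcases (hV0 ω).eq_or_lt with h0 | h0
      · rw [← h0]; simp
      · calc V ω ^ 2 * (pK K).eval (V ω) ≤ V ω ^ 2 * (V ω ^ 2)⁻¹ := by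
              gcongr; exact pK_le h0 (hV1 ω) K
          _ = 1 := by field_simp
    · refine Eventually.of_forall fun ω => ?_
      rcases (hV0 ω).eq_or_lt with h0 | h0
      · rw [Set.indicator_of_notMem (by simp [← h0]), ← h0]; simp
      · rw [Set.indicator_of_mem (by exact h0)]
        have := (pK_tendsto h0 (hV1 ω)).const_mul (V ω ^ 2)
        rw [mul_inv_cancel₀ (by positivity)] at this
        exact this
  have hlim2 : Tendsto (fun K => ∫ ω, (pK K).eval (W ω) ∂P) atTop
      (𝓝 (P.real {ω | 0 < V ω} / e)) := by
    refine (hlim.div_const e).congr fun K => ?_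
    rw [← hpol]; field_simp
  have hl : Tendsto (fun K => ∫⁻ ω, ENNReal.ofReal ((pK K).eval (W ω)) ∂P) atTop
      (𝓝 (∫⁻ ω, ENNReal.ofReal ((W ω ^ 2)⁻¹) ∂P)) := by
    refine lintegral_tendsto_of_tendsto_of_monotone
      (fun K => ((hpW (pK K)).1.aemeasurable).ennreal_ofReal) ?_ ?_
    · exact Eventually.of_forall fun ω i j hij =>
        ENNReal.ofReal_le_ofReal (pK_mono (hW1 ω) hij)
    · exact Eventually.of_forall fun ω =>
        (ENNReal.continuous_ofReal.tendsto _).comp (pK_tendsto (hW0 ω) (hW1 ω))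
  have hl2 : Tendsto (fun K => ∫⁻ ω, ENNReal.ofReal ((pK K).eval (W ω)) ∂P) atTop
      (𝓝 (ENNReal.ofReal (P.real {ω | 0 < V ω} / e))) := by
    refine ((ENNReal.continuous_ofReal.tendsto _).comp hlim2).congr fun K => ?_
    exact ofReal_integral_eq_lintegral_ofReal (hpW _)
      (Eventually.of_forall fun ω => pK_nonneg (hW1 ω) K)
  have heq := tendsto_nhds_unique hl hl2
  have hm : AEStronglyMeasurable (fun ω => (W ω ^ 2)⁻¹) P :=
    (hW.pow_const 2).inv.aestronglyMeasurable
  have hnn : 0 ≤ᵐ[P] fun ω => (W ω ^ 2)⁻¹ := Eventually.of_forall fun ω => by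
    have := hW0 ω
    simp only [Pi.zero_apply]
    positivity
  refine ⟨⟨hm, ?_⟩, ?_⟩
  · rw [hasFiniteIntegral_iff_ofReal hnn, heq]
    exact ENNReal.ofReal_lt_top
  · rw [integral_eq_lintegral_of_nonneg_ae hnn hm, heq, ENNReal.toReal_ofReal (by positivity)]
    field_simp

/-- The distribution function of the integral. -/
lemma cdf_identity (hB : IsBrownianMotion P B) {t : ℝ} (ht : 0 < t) {u : ℝ} (hu : 0 < u) :
    Integrable (fun ω => Real.exp (2 * (M B t ω / (u + A B t ω)))) P ∧
    Real.exp (-(2 / u)) * ∫ ω, Real.exp (2 * (M B t ω / (u + A B t ω))) ∂P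
      = P.real {ω | A B t ω < u} := by
  have := hB.isProbabilityMeasure
  have hA := A_meas hB ht
  have hM := M_meas hB t
  have key := moments (P := P) (W := fun ω => Real.exp (-(M B t ω / (u + A B t ω))))
    (V := fun ω => fpos 1 ((u - A B t ω) / M B t ω)) (by fun_prop)
    ((fpos_meas 1).comp (by fun_prop)) (fun ω => Real.exp_pos _) (fun ω => by
      have := A_nonneg (B := B) ht ω
      have := M_pos (B := B) t ω
      exact Real.exp_le_one_iff.2 (neg_nonpos.2 (by positivity)))
    (fun ω => fpos_nonneg _ _) (fun ω => (le_abs_self _).trans (fpos_bound zero_le_one _))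
    (e := Real.exp (-(2 / u))) (Real.exp_pos _) (by
      intro n
      have := key_identity hB ht (c := n) (Nat.cast_nonneg n) hu
      convert this using 4 with ω ω
      · rw [← Real.exp_nat_mul]; congr 1; ring
      · unfold fpos
        split_ifs with h
        · rw [← Real.exp_nat_mul]; congr 1; push_cast; ring
        · simp)
  have e1 : ∀ ω, (Real.exp (-(M B t ω / (u + A B t ω))) ^ 2)⁻¹
      = Real.exp (2 * (M B t ω / (u + A B t ω))) := by
    intro ω
    rw [← Real.exp_nat_mul, ← Real.exp_neg]; congr 1; push_cast; ring
  have e2 : {ω | 0 < fpos 1 ((u - A B t ω) / M B t ω)} = {ω | A B t ω < u} := by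
    ext ω
    have hp := M_pos (B := B) t ω
    simp only [Set.mem_ofPred_eq]
    have : 0 < (u - A B t ω) / M B t ω ↔ A B t ω < u := by
      rw [div_pos_iff_of_pos_right hp, sub_pos]
    rw [← this]
    unfold fpos
    split_ifs with h
    · simp only [h, Real.exp_pos]
    · simp [h]
  simp only [e1, e2] at key
  exact key

/-- The distribution function `G`. -/
def Gf {Ω : Type*} [MeasurableSpace Ω] (P : Measure Ω) (B : ℝ → Ω → ℝ) (t u : ℝ) : ℝ :=
  Real.exp (-(2 / u)) * ∫ ω, Real.exp (2 * (M B t ω / (u + A B t ω))) ∂P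

lemma Gf_deriv (hB : IsBrownianMotion P B) {t : ℝ} (ht : 0 < t) {a : ℝ} (ha : 0 < a) :
    HasDerivAt (Gf P B t)
      (2 / a ^ 2 * Real.exp (-(2 / a)) * (∫ ω, Real.exp (2 * (M B t ω / (a + A B t ω))) ∂P)
        - Real.exp (-(2 / a)) * ∫ ω, 2 * M B t ω / (a + A B t ω) ^ 2 *
          Real.exp (2 * (M B t ω / (a + A B t ω))) ∂P) a := by
  have := hB.isProbabilityMeasure
  have hA := A_meas hB ht
  have hM := M_meas hB t
  have hI := (cdf_identity hB ht (u := a / 4) (by positivity)).1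
  have hd := hasDerivAt_integral_of_dominated_loc_of_deriv_le (μ := P) (x₀ := a)
    (s := Set.Ioi (a / 2))
    (F := fun u ω => Real.exp (2 * (M B t ω / (u + A B t ω))))
    (F' := fun u ω => -(2 * M B t ω / (u + A B t ω) ^ 2 *
          Real.exp (2 * (M B t ω / (u + A B t ω)))))
    (bound := fun ω => 4 / a * Real.exp (2 * (M B t ω / (a / 4 + A B t ω))))
    (Ioi_mem_nhds (by linarith))
    (Eventually.of_forall fun u => Measurable.aestronglyMeasurable (by fun_prop))
    (cdf_identity hB ht ha).1
    (Measurable.aestronglyMeasurable (by fun_prop))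
    (Eventually.of_forall fun ω u hu => by
      have hA0 := A_nonneg (B := B) ht ω
      have hM0 := M_pos (B := B) t ω
      set x := A B t ω
      set m := M B t ω
      have hu' : a / 2 < u := hu
      have hu0 : 0 < u := by linarith
      rw [norm_neg, Real.norm_eq_abs, abs_of_nonneg (by positivity)]
      set y1 := m / (a / 4 + x) with hy1
      set y2 := m / (a / 2 + x) with hy2
      have hle : m / (u + x) ≤ y2 := by rw [hy2]; gcongr
      have h1 : 2 * m / (u + x) ^ 2 ≤ 2 * m / ((a / 4 + x) * (a / 2 + x)) := by
        rw [sq]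
        gcongr
        linarith
      have h2 : 2 * m / ((a / 4 + x) * (a / 2 + x)) = 4 / a * (2 * (y1 - y2)) := by
        rw [hy1, hy2]; field_simp; ring
      have h3 : 2 * (y1 - y2) ≤ Real.exp (2 * (y1 - y2)) := by
        linarith [Real.add_one_le_exp (2 * (y1 - y2))]
      calc 2 * m / (u + x) ^ 2 * Real.exp (2 * (m / (u + x)))
          ≤ (4 / a * Real.exp (2 * (y1 - y2))) * Real.exp (2 * y2) := by
            have : 2 * m / (u + x) ^ 2 ≤ 4 / a * Real.exp (2 * (y1 - y2)) := by
              rw [h2] at h1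
              exact h1.trans (by gcongr)
            gcongr
        _ = 4 / a * Real.exp (2 * y1) := by
            rw [mul_assoc, ← Real.exp_add]; congr 2; ring)
    (hI.const_mul _)
    (Eventually.of_forall fun ω u hu => by
      have hA0 := A_nonneg (B := B) ht ω
      have hu' : a / 2 < u := hu
      have hne : u + A B t ω ≠ 0 := by linarith
      have h1 : HasDerivAt (fun u => u + A B t ω) 1 u := (hasDerivAt_id u).add_const _
      have h2 := (((hasDerivAt_const u (M B t ω)).div h1 hne).const_mul 2).exp
      refine HasDerivAt.congr_deriv h2 ?_
      simp only [Pi.div_apply]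
      field_simp
      ring)
  have hd2 := hd.2
  have he : HasDerivAt (fun u : ℝ => Real.exp (-(2 / u))) (2 / a ^ 2 * Real.exp (-(2 / a))) a := by
    have := (((hasDerivAt_const a (2 : ℝ)).div (hasDerivAt_id a) ha.ne').neg).exp
    refine this.congr_deriv ?_
    simp only [Pi.neg_apply, Pi.div_apply, id]
    field_simp
    ring
  have := he.mul hd2
  refine this.congr_deriv ?_
  rw [integral_neg]
  ring

end moments
section final

open Filter Topology

variable {Ω : Type*} [MeasurableSpace Ω] {P : Measure Ω} {B : ℝ → Ω → ℝ}

lemma exp_mart (hB : IsBrownianMotion P B) {s : ℝ} (hs : 0 ≤ s) :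
    Integrable (fun ω => Real.exp (B s ω - s / 2)) P ∧
      ∫ ω, Real.exp (B s ω - s / 2) ∂P = 1 := by
  have := hB.isProbabilityMeasure
  have hm := hB.measurable s
  have hlaw : P.map (B s) = gaussianReal 0 (Real.toNNReal s) := by
    have := hB.gaussian_increments 0 s le_rfl hs
    simpa [hB.start] using this
  have hmgf := mgf_gaussianReal hlaw 1
  simp only [mgf, one_mul, zero_add, one_pow, mul_one, Real.coe_toNNReal s hs] at hmgf
  have e : ∀ ω, Real.exp (B s ω - s / 2) = Real.exp (B s ω) * Real.exp (-(s / 2)) := by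
    intro ω; rw [← Real.exp_add]; rfl
  have hi : Integrable (fun ω => Real.exp (B s ω)) P := by
    by_contra h
    rw [integral_undef h] at hmgf
    exact (Real.exp_pos _).ne hmgf
  simp only [e]
  refine ⟨hi.mul_const _, ?_⟩
  rw [integral_mul_const, hmgf, ← Real.exp_add]
  simp

lemma A_integrable (hB : IsBrownianMotion P B) {t : ℝ} (ht : 0 < t) : Integrable (A B t) P := by
  have := hB.isProbabilityMeasure
  have hSi : ∀ n : ℕ, Integrable (Sk B (t / n) n) P ∧ ∫ ω, Sk B (t / n) n ω ∂P ≤ t := by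
    intro n
    have hk : ∀ k : ℕ, Integrable (Mk B (t / n) k) P ∧ ∫ ω, Mk B (t / n) k ω ∂P = 1 := fun k =>
      exp_mart hB (s := k * (t / n)) (by positivity)
    have hs := integrable_finsetSum (Finset.range n) fun k _ => (hk k).1
    refine ⟨hs.const_mul _, ?_⟩
    simp only [Sk]
    rw [integral_const_mul, integral_finsetSum _ fun k _ => (hk k).1]
    simp only [(hk _).2, Finset.sum_const, Finset.card_range, nsmul_eq_mul, mul_one]
    rcases eq_or_ne (n : ℝ) 0 with h | h
    · rw [h]; simpa using ht.le
    · rw [div_mul_cancel₀ _ h]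
  have hA0 : 0 ≤ᵐ[P] A B t := Eventually.of_forall fun ω => A_nonneg ht ω
  refine ⟨(A_meas hB ht).aestronglyMeasurable, ?_⟩
  rw [hasFiniteIntegral_iff_ofReal hA0]
  have hF := lintegral_liminf_le (μ := P) (u := atTop)
    (f := fun (n : ℕ) ω => ENNReal.ofReal (Sk B (t / n) n ω))
    (fun n => (Sk_meas hB _ n).ennreal_ofReal)
  have e1 : ∀ ω, liminf (fun n : ℕ => ENNReal.ofReal (Sk B (t / n) n ω)) atTop
      = ENNReal.ofReal (A B t ω) := fun ω =>
    ((ENNReal.continuous_ofReal.tendsto _).comp (Sk_tendsto hB ht ω)).liminf_eq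
  simp only [e1] at hF
  refine hF.trans_lt (lt_of_le_of_lt ?_ (ENNReal.ofReal_lt_top (r := t)))
  refine (liminf_le_liminf (v := fun _ => ENNReal.ofReal t) (Eventually.of_forall fun n => ?_)).trans
    (by rw [liminf_const])
  rw [← ofReal_integral_eq_lintegral_ofReal (hSi n).1
    (Eventually.of_forall fun ω => Sk_nonneg (by positivity) n ω)]
  exact ENNReal.ofReal_le_ofReal (hSi n).2

lemma no_atom (hB : IsBrownianMotion P B) {t : ℝ} (ht : 0 < t) {u : ℝ} (hu : 0 < u) :
    P {ω | A B t ω = u} = 0 := by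
  have := hB.isProbabilityMeasure
  have hA := A_meas hB ht
  have hG : ∀ v, 0 < v → Gf P B t v = P.real {ω | A B t ω < v} := fun v hv =>
    (cdf_identity hB ht hv).2
  have hle : P.real {ω | A B t ω ≤ u} ≤ Gf P B t u := by
    have hc : Tendsto (Gf P B t) (𝓝[>] u) (𝓝 (Gf P B t u)) :=
      (Gf_deriv hB ht hu).continuousAt.tendsto.mono_left nhdsWithin_le_nhds
    refine ge_of_tendsto hc ?_
    filter_upwards [self_mem_nhdsWithin] with v hv
    have hv' : u < v := hv
    rw [hG v (hu.trans hv')]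
    refine measureReal_mono (fun ω hω => ?_)
    exact lt_of_le_of_lt hω hv'
  have hun : {ω | A B t ω ≤ u} = {ω | A B t ω < u} ∪ {ω | A B t ω = u} := by
    ext ω; exact le_iff_lt_or_eq (a := A B t ω) (b := u)
  rw [hun, measureReal_union (by
      rw [Set.disjoint_left]; intro ω h1 h2; exact (ne_of_lt h1) h2)
    (measurableSet_eq_fun hA measurable_const), hG u hu] at hle
  have h0 : P.real {ω | A B t ω = u} = 0 := le_antisymm (by linarith) measureReal_nonneg
  exact (measureReal_eq_zero_iff).1 h0

lemma first_deriv (hB : IsBrownianMotion P B) {t : ℝ} (ht : 0 < t) {u : ℝ} (hu : 0 < u) :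
    HasDerivAt (fun u => ∫ ω, max (A B t ω - u) 0 ∂P) (Gf P B t u - 1) u := by
  have := hB.isProbabilityMeasure
  have hA := A_meas hB ht
  have hAi := A_integrable hB ht
  have hd := hasDerivAt_integral_of_dominated_loc_of_lip (μ := P) (x₀ := u) (s := Set.univ)
    (F := fun u ω => max (A B t ω - u) 0)
    (F' := fun ω => {ω | A B t ω < u}.indicator 1 ω - 1) (bound := fun _ => 1)
    univ_mem
    (Eventually.of_forall fun v => Measurable.aestronglyMeasurable (by fun_prop))
    ((hAi.sub (integrable_const u)).pos_part)
    (((measurable_one.indicator (measurableSet_lt hA measurable_const)).sub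
      measurable_const).aestronglyMeasurable)
    (Eventually.of_forall fun ω => by
      refine LipschitzOnWith.of_dist_le_mul fun x _ y _ => ?_
      simp only [Real.dist_eq, map_one, NNReal.coe_one, one_mul]
      refine (abs_max_sub_max_le_abs _ _ _).trans (le_of_eq ?_)
      rw [show A B t ω - x - (A B t ω - y) = -(x - y) by ring, abs_neg])
    (integrable_const _)
    (by
      have hne : ∀ᵐ ω ∂P, A B t ω ≠ u := by
        rw [ae_iff]; simpa using no_atom hB ht hu
      filter_upwards [hne] with ω hω
      rcases lt_or_gt_of_ne hω with h | h
      · rw [Set.indicator_of_mem (by exact h), Pi.one_apply, sub_self]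
        refine (hasDerivAt_const u (0 : ℝ)).congr_of_eventuallyEq ?_
        filter_upwards [eventually_gt_nhds h] with v hv
        exact max_eq_right (by linarith)
      · rw [Set.indicator_of_notMem (by exact h.not_gt)]
        refine (((hasDerivAt_id u).const_sub (A B t ω)).congr_of_eventuallyEq ?_).congr_deriv
          (by simp)
        filter_upwards [eventually_lt_nhds h] with v hv
        exact max_eq_left (by linarith))
  refine hd.2.congr_deriv ?_
  have hms : MeasurableSet {ω | A B t ω < u} := measurableSet_lt hA measurable_const
  rw [integral_sub (show Integrable ({ω | A B t ω < u}.indicator (1 : Ω → ℝ)) P from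
      (integrable_const (1 : ℝ)).indicator hms) (integrable_const _),
    integral_indicator_one hms]
  simp only [integral_const, probReal_univ, smul_eq_mul, mul_one]
  rw [Gf, (cdf_identity hB ht hu).2]

end final

variable {Ω : Type*} [MeasurableSpace Ω] (P : MeasureTheory.Measure Ω) (B : ℝ → Ω → ℝ)

theorem second_deriv_expected_max (hB : IsBrownianMotion P B) (t a : ℝ)
    (ht : 0 < t) (ha : 0 < a) :
    DifferentiableAt ℝ (fun u => ∫ ω, max (A B t ω - u) 0 ∂P) a ∧
    HasDerivAt (deriv (fun u => ∫ ω, max (A B t ω - u) 0 ∂P))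
      (2 / a ^ 2 * Real.exp (-2 / a) *
          (∫ ω, Real.exp (2 * Real.exp (B t ω - t / 2) / (a + A B t ω)) ∂P)
        - 1 / 2 * Real.exp (-2 / a) *
          ∫ ω, M B t ω * (a / 2 + A B t ω / 2)⁻¹ ^ 2 *
                Real.exp (M B t ω / (a / 2 + A B t ω / 2)) ∂P) a := by
  have hev : deriv (fun u => ∫ ω, max (A B t ω - u) 0 ∂P) =ᶠ[nhds a] fun u => Gf P B t u - 1 := by
    filter_upwards [eventually_gt_nhds ha] with u hu
    exact (first_deriv hB ht hu).deriv
  refine ⟨(first_deriv hB ht ha).differentiableAt, ?_⟩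
  refine (((Gf_deriv hB ht ha).sub_const 1).congr_of_eventuallyEq hev).congr_deriv ?_
  have e1 : ∀ ω, Real.exp (2 * Real.exp (B t ω - t / 2) / (a + A B t ω))
      = Real.exp (2 * (M B t ω / (a + A B t ω))) := by
    intro ω; rw [mul_div_assoc]; rfl
  have e2 : ∀ ω, M B t ω * (a / 2 + A B t ω / 2)⁻¹ ^ 2 *
                Real.exp (M B t ω / (a / 2 + A B t ω / 2))
      = 2 * (2 * M B t ω / (a + A B t ω) ^ 2 * Real.exp (2 * (M B t ω / (a + A B t ω)))) := by
    intro ω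
    have hA0 := A_nonneg (B := B) ht ω
    have hne : a + A B t ω ≠ 0 := by positivity
    have h1 : M B t ω / (a / 2 + A B t ω / 2) = 2 * (M B t ω / (a + A B t ω)) := by
      rw [← add_div]; field_simp
    rw [h1, ← add_div]
    field_simp
  simp only [e1, e2]
  rw [integral_const_mul, neg_div]
  ring
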